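/- Let V ⊆ ℂ^n be an irreducible variety of dimension d. Then there exist polynomials f_1,…,f_{n−d} ∈ ℂ[x_1,…,x_n] such that V is an irreducible component of Z(f_1,…,f_{n−d}) and ∏_{i=1}^{n−d} deg(f_i) ≤ C(n)·deg(V) for some constant C(n) depending only on n. -/

import Mathlib

open MvPolynomial Set

noncomputable section

namespace Paper

variable (n : ℕ)

/-- The zero locus in `ℂⁿ` of a set of polynomials. -/
def zeroLocus (I : Set (MvPolynomial (Fin n) ℂ)) : Set (Fin n → ℂ) :=
  {x | ∀ f ∈ I, eval x f = 0}

/-- A subset of `ℂⁿ` is algebraic if it is the zero locus of a set of polynomials. -/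
def IsAlgebraicSet (V : Set (Fin n → ℂ)) : Prop :=
  ∃ I : Set (MvPolynomial (Fin n) ℂ), V = zeroLocus n I

/-- An irreducible (affine) variety in `ℂⁿ`: a nonempty algebraic set that is not covered
by two algebraic sets unless it is contained in one of them. -/
def IsIrredVariety (V : Set (Fin n → ℂ)) : Prop :=
  IsAlgebraicSet n V ∧ V.Nonempty ∧
    ∀ V₁ V₂ : Set (Fin n → ℂ), IsAlgebraicSet n V₁ → IsAlgebraicSet n V₂ →
      V ⊆ V₁ ∪ V₂ → V ⊆ V₁ ∨ V ⊆ V₂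

/-- There is a strictly increasing chain of `d + 1` irreducible varieties inside `V`. -/
def HasChain (V : Set (Fin n → ℂ)) (d : ℕ) : Prop :=
  ∃ W : Fin (d + 1) → Set (Fin n → ℂ),
    (∀ i, IsIrredVariety n (W i)) ∧ (∀ i j : Fin (d + 1), i < j → W i ⊂ W j) ∧
      W (Fin.last d) ⊆ V

/-- The (Krull) dimension of a subset of `ℂⁿ`, as the length of the longest chain of
irreducible subvarieties. -/
def dim (V : Set (Fin n → ℂ)) : ℕ := sSup {d | HasChain n V d}

/-- `W` is an irreducible component of `X`: an irreducible subvariety that is maximal among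
irreducible subvarieties of `X`. -/
def IsIrredComponent (W X : Set (Fin n → ℂ)) : Prop :=
  IsIrredVariety n W ∧ W ⊆ X ∧
    ∀ W', IsIrredVariety n W' → W ⊆ W' → W' ⊆ X → W' = W

/-- The degree of an irreducible variety `V ⊆ ℂⁿ` of dimension `d` (i.e. the degree of its
projective closure): the largest finite number of points in which an affine-linear subspace of
dimension `n - d` meets `V`. -/
def degree (V : Set (Fin n → ℂ)) : ℕ :=
  sSup { m | ∃ L : AffineSubspace ℂ (Fin n → ℂ),
    Module.finrank ℂ L.direction = n - dim n V ∧ (V ∩ ↑L).Finite ∧ (V ∩ ↑L).ncard = m }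

/-- The degree of an algebraic set: the sum of the degrees of its irreducible components. -/
def degreeSum (X : Set (Fin n → ℂ)) : ℕ :=
  ∑ᶠ W ∈ {W | IsIrredComponent n W X}, degree n W

/-- The maximal dimension of an irreducible component of `X` containing `V` equals `e`. -/
def MaxCompDimEq (X V : Set (Fin n → ℂ)) (e : ℕ) : Prop :=
  (∃ W, IsIrredComponent n W X ∧ V ⊆ W ∧ dim n W = e) ∧
    ∀ W, IsIrredComponent n W X → V ⊆ W → dim n W ≤ e

/-- The partial degrees `δ_i(V)` of an irreducible variety `V`:  the minimal `δ` such that there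
are polynomials of degree at most `δ` cutting out an algebraic set containing `V` whose
irreducible components containing `V` have maximal dimension `n - i`.  By convention
`δ_0(V) = 0`. -/
def partialDeg (V : Set (Fin n → ℂ)) (i : ℕ) : ℕ :=
  if i = 0 then 0
  else sInf { δ | ∃ I : Finset (MvPolynomial (Fin n) ℂ),
    (∀ f ∈ I, f.totalDegree ≤ δ) ∧ V ⊆ zeroLocus n ↑I ∧
      MaxCompDimEq n (zeroLocus n ↑I) V (n - i) }

/-- The partial degrees as extended naturals, with the convention `δ_i(V) = ∞` for
`i > n - dim V`. -/
def partialDegE (V : Set (Fin n → ℂ)) (i : ℕ) : ℕ∞ :=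
  if i ≤ n - dim n V then (partialDeg n V i : ℕ∞) else ⊤

/-- `δ(V)` for an irreducible variety `V`: the minimal `δ` such that `V` is an irreducible
component of the zero set of a finite family of polynomials of degree at most `δ`. -/
def deltaIrr (V : Set (Fin n → ℂ)) : ℕ :=
  sInf { δ | ∃ I : Finset (MvPolynomial (Fin n) ℂ),
    (∀ f ∈ I, f.totalDegree ≤ δ) ∧ IsIrredComponent n V (zeroLocus n ↑I) }

/-- `δ(V)` for a general algebraic set `V`: the minimal `δ` such that every irreducible
component of `V` is an irreducible component of the zero set of a finite family of polynomials
of degree at most `δ`. -/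
def deltaSet (V : Set (Fin n → ℂ)) : ℕ :=
  sInf { δ | ∃ I : Finset (MvPolynomial (Fin n) ℂ),
    (∀ f ∈ I, f.totalDegree ≤ δ) ∧
      ∀ W, IsIrredComponent n W V → IsIrredComponent n W (zeroLocus n ↑I) }

/-- An algebraic set all of whose irreducible components have dimension `d`. -/
def IsAlgSetOfDim (V : Set (Fin n → ℂ)) (d : ℕ) : Prop :=
  IsAlgebraicSet n V ∧ V.Nonempty ∧ ∀ W, IsIrredComponent n W V → dim n W = d

/-- `Δ_i(V) = max (deg V / (δ_{i+1}(V) ⋯ δ_{n-d}(V))) 1`. -/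
def Delta (V : Set (Fin n → ℂ)) (i : ℕ) : ℝ :=
  max ((degree n V : ℝ) / ∏ j ∈ Finset.Icc (i + 1) (n - dim n V), (partialDeg n V j : ℝ)) 1

/-- `i` is admissible with respect to `V` if `δ_{i+1}(V) > 2 i δ_i(V)` (with the convention
`δ_i(V) = ∞` for `i > n - dim V`). -/
def Admissible (V : Set (Fin n → ℂ)) (i : ℕ) : Prop :=
  ((2 * i : ℕ) : ℕ∞) * partialDegE n V i < partialDegE n V (i + 1)

/-- The interval `ℛ_i(V) = [c₁ δ_i(V)^{n-i} Δ_i(V), (c₀/2) δ_{i+1}(V)^{n-i} Δ_i(V)]`,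
where `δ_{n-d+1}(V) = ∞` makes the last interval a half-line. -/
def RSet (c0 c1 : ℝ) (V : Set (Fin n → ℂ)) (i : ℕ) : Set ℝ :=
  if i = n - dim n V then
    Set.Ici (c1 * (partialDeg n V i : ℝ) ^ (n - i) * Delta n V i)
  else
    Set.Icc (c1 * (partialDeg n V i : ℝ) ^ (n - i) * Delta n V i)
      ((c0 / 2) * (partialDeg n V (i + 1) : ℝ) ^ (n - i) * Delta n V i)

/-- The interval `ℛ^l_{s,τ}(V) = [τ δ_s(V)^{n-(s+l)} Δ_s(V), τ δ_{s+1}(V)^{n-(s+l)} Δ_s(V)]`,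
where `δ_{n-d+1}(V) = ∞` makes the last interval a half-line. -/
def RlSet (τ : ℝ) (l : ℕ) (V : Set (Fin n → ℂ)) (s : ℕ) : Set ℝ :=
  if s = n - dim n V then
    Set.Ici (τ * (partialDeg n V s : ℝ) ^ (n - (s + l)) * Delta n V s)
  else
    Set.Icc (τ * (partialDeg n V s : ℝ) ^ (n - (s + l)) * Delta n V s)
      (τ * (partialDeg n V (s + 1) : ℝ) ^ (n - (s + l)) * Delta n V s)

/-- The ideal `I(V)` of polynomials vanishing on `V ⊆ ℂⁿ`. -/
def vanishingIdeal (V : Set (Fin n → ℂ)) : Ideal (MvPolynomial (Fin n) ℂ) where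
  carrier := {f | ∀ x ∈ V, eval x f = 0}
  add_mem' := by
    intro a b ha hb x hx
    simp [ha x hx, hb x hx]
  zero_mem' := by
    intro x hx
    simp
  smul_mem' := by
    intro c f hf x hx
    simp [smul_eq_mul, hf x hx]

/-- The ideal `I_ℝ(V)` of real polynomials vanishing on `V ⊆ ℂⁿ`. -/
def vanishingIdealR (V : Set (Fin n → ℂ)) : Ideal (MvPolynomial (Fin n) ℝ) :=
  (vanishingIdeal n V).comap (MvPolynomial.map (algebraMap ℝ ℂ))

/-- The affine Hilbert function `H_{I(V)}(m) = dim_ℂ ℂ[x]_{≤ m} / I(V)_{≤ m}`, realised as the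
dimension of the image of the space of polynomials of total degree at most `m` in the quotient
ring `ℂ[x]/I(V)`. -/
def hilbert (V : Set (Fin n → ℂ)) (m : ℕ) : ℕ :=
  Module.finrank ℂ
    (Submodule.map (Ideal.Quotient.mkₐ ℂ (vanishingIdeal n V)).toLinearMap
      (restrictTotalDegree (Fin n) ℂ m))

/-- The real affine Hilbert function `H_{I(V),ℝ}(m) = dim_ℝ ℝ[x]_{≤ m} / I_ℝ(V)_{≤ m}`. -/
def hilbertR (V : Set (Fin n → ℂ)) (m : ℕ) : ℕ :=
  Module.finrank ℝ
    (Submodule.map (Ideal.Quotient.mkₐ ℝ (vanishingIdealR n V)).toLinearMap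
      (restrictTotalDegree (Fin n) ℝ m))

/-- The inclusion `ℝⁿ → ℂⁿ`. -/
def toC (x : Fin n → ℝ) : Fin n → ℂ := fun i => (x i : ℂ)

/-- The set of real points of `V ⊆ ℂⁿ`. -/
def realPts (V : Set (Fin n → ℂ)) : Set (Fin n → ℝ) := {x | toC n x ∈ V}

/-- The real zero set of a real polynomial. -/
def zeroSetR (g : MvPolynomial (Fin n) ℝ) : Set (Fin n → ℝ) := {x | eval x g = 0}

/-- The zero locus of the polynomials `P 1, …, P i` (the first `i` members of a tuple of
polynomials indexed from `1`). -/
def zeroLocusUpTo (P : ℕ → MvPolynomial (Fin n) ℂ) (i : ℕ) : Set (Fin n → ℂ) :=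
  zeroLocus n {f | ∃ j : ℕ, 1 ≤ j ∧ j ≤ i ∧ f = P j}

/-- `V'` is an `(n-s)`-minimal variety of the irreducible variety `V`. -/
def IsMinimalVariety (V V' : Set (Fin n → ℂ)) (s : ℕ) : Prop :=
  IsIrredVariety n V' ∧ V ⊆ V' ∧ dim n V' = n - s ∧
    ∀ f ∈ vanishingIdeal n V, f ∉ vanishingIdeal n V' →
      partialDegE n V (s + 1) ≤ (f.totalDegree : ℕ∞)

/-- `S` is `(k,b)`-free with respect to `T`, for the incidence relation `R`. -/
def KBFree {α β : Type*} (R : α → β → Prop) (S : Finset α) (T : Finset β) (k b : ℕ) : Prop :=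
  ¬ ∃ (P : Finset α) (B : Finset β), P ⊆ S ∧ B ⊆ T ∧ P.card = k ∧ B.card = b ∧
      ∀ s ∈ P, ∀ t ∈ B, R s t

/-- The number of incidences between a finite set of points and a finite family of sets. -/
def incCountAbs {α : Type*} (S : Finset α) (T : Finset (Set α)) : ℕ :=
  ∑ t ∈ T, (↑S ∩ t).ncard

/-- The number of incidences between a finite set of real points and a finite family of
subsets of `ℂⁿ`. -/
def incCount (S : Finset (Fin n → ℝ)) (T : Finset (Set (Fin n → ℂ))) : ℕ :=
  ∑ t ∈ T, (↑S ∩ toC n ⁻¹' t).ncard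

/-- The total degree `deg T = ∑_{t ∈ T} deg t` of a finite family of algebraic sets. -/
def degFamily (T : Finset (Set (Fin n → ℂ))) : ℕ := ∑ t ∈ T, degreeSum n t

/-- The total degree of a finite family of irreducible varieties. -/
def degFamilyIrred (T : Finset (Set (Fin n → ℂ))) : ℕ := ∑ t ∈ T, degree n t

/-- `α_k(d)`. -/
def alpha (k d : ℕ) : ℝ :=
  if k = 1 ∧ d = 1 then 0 else (k : ℝ) * ((d : ℝ) - 1) / ((d : ℝ) * (k : ℝ) - 1)

/-- `β_k(d)`. -/
def beta (k d : ℕ) : ℝ :=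
  if k = 1 ∧ d = 1 then 1 else (d : ℝ) * ((k : ℝ) - 1) / ((d : ℝ) * (k : ℝ) - 1)

/-- `τ_d(b,k) = b^{1-β_k(d)} k^{1-α_k(d)}`. -/
def tauC (d b k : ℕ) : ℝ := (b : ℝ) ^ (1 - beta k d) * (k : ℝ) ^ (1 - alpha k d)

/-- The Chardin–Philippon property of the constant `c₀`: for every pure-dimensional algebraic
set `W ⊆ ℂⁿ` and every `m ≥ 2 (n - dim W) δ(W)` one has `H_{I(W)}(m) ≥ c₀ m^{dim W} deg W`. -/
def ChardinPhilippon (c0 : ℝ) : Prop :=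
  ∀ (W : Set (Fin n → ℂ)) (e : ℕ), IsAlgSetOfDim n W e →
    ∀ m : ℕ, 2 * (n - e) * deltaSet n W ≤ m →
      c0 * (m : ℝ) ^ e * (degreeSum n W : ℝ) ≤ (hilbert n W m : ℝ)

/-- The defining property of the constant `c₁`: for every irreducible variety `V`, every
positive integer lies in some interval `ℛ_i(V)` with `i` admissible with respect to `V`. -/
def CoversPositiveIntegers (c0 c1 : ℝ) : Prop :=
  ∀ V : Set (Fin n → ℂ), IsIrredVariety n V →
    ∀ m : ℕ, 0 < m → ∃ i, Admissible n V i ∧ (m : ℝ) ∈ RSet n c0 c1 V i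

/-- `i_V(M)`: the smallest admissible `i` such that `M^{n-i} Δ_i(V) ∈ ℛ_i(V)`. -/
def iV (c0 c1 : ℝ) (V : Set (Fin n → ℂ)) (M : ℕ) : ℕ :=
  sInf {i | Admissible n V i ∧ (M : ℝ) ^ (n - i) * Delta n V i ∈ RSet n c0 c1 V i}

/-- A real polynomial bisects a finite set `S ⊆ ℝⁿ` if it is positive on at most half of `S`
and negative on at most half of `S`. -/
def Bisects (g : MvPolynomial (Fin n) ℝ) (S : Finset (Fin n → ℝ)) : Prop :=
  ((↑S ∩ {x | 0 < eval x g}).ncard : ℝ) ≤ (S.card : ℝ) / 2 ∧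
    ((↑S ∩ {x | eval x g < 0}).ncard : ℝ) ≤ (S.card : ℝ) / 2

/-- The set of `r`-rich points of a family `T`: points lying in at least `r` members of `T`. -/
def richPts (T : Finset (Set (Fin n → ℂ))) (r : ℕ) : Set (Fin n → ℂ) :=
  {x | r ≤ ({t | t ∈ T ∧ x ∈ t} : Set (Set (Fin n → ℂ))).ncard}

/-- A real hypersurface of degree at most `D`: the real zero set of a nonzero real polynomial
of degree at most `D`. -/
def IsRealHypersurfaceDegLE (t : Set (Fin n → ℝ)) (D : ℕ) : Prop :=
  ∃ p : MvPolynomial (Fin n) ℝ, p ≠ 0 ∧ t = zeroSetR n p ∧ p.totalDegree ≤ D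

/-- Lexicographic comparison of the tuples `(f 1, …, f m)` and `(g 1, …, g m)`. -/
def LexLE (m : ℕ) (f g : ℕ → ℕ) : Prop :=
  (∀ j ∈ Finset.Icc 1 m, f j = g j) ∨
    ∃ i ∈ Finset.Icc 1 m, (∀ j, 1 ≤ j → j < i → f j = g j) ∧ f i < g i


section Part1

/-- span of 1 and the given elements -/
def XX {A : Type*} [CommRing A] [Algebra ℂ A] {k : ℕ} (x : Fin k → A) : Submodule ℂ A :=
  Submodule.span ℂ (insert 1 (Set.range x))

section NN
variable {A : Type*} [CommRing A] [Algebra ℂ A]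

lemma one_mem_XX {k : ℕ} (x : Fin k → A) : (1 : A) ∈ XX x :=
  Submodule.subset_span (Set.mem_insert _ _)

lemma mem_XX {k : ℕ} (x : Fin k → A) (i : Fin k) : x i ∈ XX x :=
  Submodule.subset_span (Set.mem_insert_of_mem _ ⟨i, rfl⟩)

lemma one_mem_pow {X : Submodule ℂ A} (h : (1 : A) ∈ X) (m : ℕ) : (1 : A) ∈ X ^ m := by
  have := Submodule.pow_mem_pow X h m
  simpa using this

lemma pow_mono_one {X : Submodule ℂ A} (h : (1 : A) ∈ X) {m k : ℕ} (hk : m ≤ k) :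
    X ^ m ≤ X ^ k := by
  obtain ⟨j, rfl⟩ := Nat.exists_eq_add_of_le hk
  intro a ha
  rw [pow_add]
  have := Submodule.mul_mem_mul ha (one_mem_pow h j)
  simpa using this

lemma step_aux {k : ℕ} (x : Fin (k+1) → A) (w : Fin (k+1) → ℂ) (t : A) (X X' : Submodule ℂ A)
    (hx : ∀ i, x i ∈ X) (ht : t ∈ X) (h : ∀ i, x i - w i • t ∈ X') (s : Multiset (Fin (k+1))) :
    (s.map x).prod - (s.map w).prod • t ^ (Multiset.card s) ∈ X' * X ^ (Multiset.card s - 1) ∧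
    (s.map x).prod ∈ X ^ (Multiset.card s) := by
  induction s using Multiset.induction_on with
  | empty => simpa using ⟨1, map_one _⟩
  | cons i s ih =>
    obtain ⟨ih1, ih2⟩ := ih
    simp only [Multiset.map_cons, Multiset.prod_cons, Multiset.card_cons, Nat.add_sub_cancel]
    constructor
    · have e : x i * (s.map x).prod - (w i * (s.map w).prod) • t ^ (Multiset.card s + 1)
        = (x i - w i • t) * (s.map x).prod +
          (w i • t) * ((s.map x).prod - (s.map w).prod • t ^ (Multiset.card s)) := by
        simp only [Algebra.smul_def, map_mul]; ring
      rw [e]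
      refine Submodule.add_mem _ (Submodule.mul_mem_mul (h i) ih2) ?_
      rcases Nat.eq_zero_or_pos (Multiset.card s) with h0 | h0
      · rw [Multiset.card_eq_zero] at h0
        subst h0
        simp
      · have := Submodule.mul_mem_mul (Submodule.smul_mem X (w i) ht) ih1
        have e2 : X * (X' * X ^ (Multiset.card s - 1)) = X' * X ^ (Multiset.card s) := by
          obtain ⟨c, hc⟩ := Nat.exists_eq_succ_of_ne_zero h0.ne'
          rw [hc]; simp only [Nat.succ_eq_add_one, Nat.add_sub_cancel, pow_succ]
          rw [mul_comm (X^c) X]; rw [mul_left_comm]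
        rwa [e2] at this
    · rw [pow_succ, mul_comm (X ^ _)]
      exact Submodule.mul_mem_mul (hx i) ih2

lemma pow_succ_le_aux (X X' : Submodule ℂ A) (t : A) (ht : t ∈ X)
    (hX : X ≤ X' ⊔ Submodule.span ℂ {t})
     (d : ℕ) : X ^ (d+1) ≤ X' * X ^ d ⊔ Submodule.span ℂ {t ^ (d+1)} := by
  induction d with
  | zero => simpa using hX
  | succ d ih =>
    have h0 : X ^ (d+1+1) = X * X^(d+1) := by rw [pow_succ, mul_comm]
    rw [h0]
    have ht' : Submodule.span ℂ {t} ≤ X := by simpa using ht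
    calc X * X^(d+1) ≤ (X' ⊔ Submodule.span ℂ {t}) * X^(d+1) := mul_le_mul' hX le_rfl
      _ = X' * X^(d+1) ⊔ Submodule.span ℂ {t} * X^(d+1) := Submodule.sup_mul _ _ _
      _ ≤ _ := by
        refine sup_le le_sup_left ?_
        calc Submodule.span ℂ {t} * X^(d+1) ≤
            Submodule.span ℂ {t} * (X' * X ^ d ⊔ Submodule.span ℂ {t ^ (d+1)}) :=
              mul_le_mul' le_rfl ih
          _ = Submodule.span ℂ {t} * (X' * X^d) ⊔
            Submodule.span ℂ {t} * Submodule.span ℂ {t ^ (d+1)} := Submodule.mul_sup _ _ _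
          _ ≤ _ := by
            refine sup_le_sup ?_ ?_
            · rw [mul_left_comm, pow_succ X, mul_comm (X^d)]
              exact mul_le_mul' le_rfl (mul_le_mul' ht' le_rfl)
            · rw [Submodule.span_mul_span, Set.singleton_mul_singleton, ← pow_succ' t]

lemma XX_le_of {k : ℕ} {x : Fin k → A} {Z : Submodule ℂ A} (h1 : 1 ∈ Z) (h : ∀ i, x i ∈ Z) :
    XX x ≤ Z := by
  unfold XX
  rw [Submodule.span_le]
  rintro _ (rfl | ⟨i, rfl⟩)
  · exact h1
  · exact h i

lemma span_le_XX {k : ℕ} (x : Fin k → A) : Submodule.span ℂ (Set.range x) ≤ XX x :=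
  Submodule.span_mono (Set.subset_insert _ _)

lemma toMultiset_map_prod {M : Type*} [CommMonoid M] {k : ℕ} (x : Fin k → M) (s : Fin k →₀ ℕ) :
    ((Finsupp.toMultiset s).map x).prod = ∏ i, x i ^ s i := by
  rw [Finsupp.toMultiset_map, Finsupp.prod_toMultiset, Finsupp.prod_mapDomain_index]
  · simp [Finsupp.prod_fintype]
  · simp
  · intros; rw [pow_add]

lemma card_toMultiset' {k : ℕ} (s : Fin k →₀ ℕ) :
    Multiset.card (Finsupp.toMultiset s) = s.degree := by
  rw [Finsupp.card_toMultiset, Finsupp.degree_eq_sum, Finsupp.sum_fintype] <;> simp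

lemma noether_step [Nontrivial A] {k : ℕ} (x : Fin (k+1) → A) (hx : ¬ AlgebraicIndependent ℂ x) :
    ∃ x' : Fin k → A, (∀ i, x' i ∈ Submodule.span ℂ (Set.range x)) ∧
      ∃ G, (XX x)^(G+1) ≤ (XX x)^G * XX x' := by
  rw [algebraicIndependent_iff] at hx
  push Not at hx
  obtain ⟨Q, hQ0, hQ⟩ := hx
  obtain ⟨d, hd⟩ : ∃ d, Q.totalDegree = d := ⟨_, rfl⟩
  have hdpos : d ≠ 0 := by
    intro h0
    rw [h0, totalDegree_eq_zero_iff_eq_C] at hd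
    rw [hd] at hQ0
    simp only [aeval_C] at hQ0
    have := (algebraMap ℂ A).injective (hQ0.trans (map_zero _).symm)
    rw [this] at hd; simp at hd; exact hQ hd
  obtain ⟨d, rfl⟩ := Nat.exists_eq_succ_of_ne_zero hdpos
  have hQd0 : homogeneousComponent (d+1) Q ≠ 0 := by
    intro h
    obtain ⟨s, hs, hs'⟩ := Finset.exists_mem_eq_sup Q.support (by simpa using hQ)
      (fun s => s.sum fun _ e => e)
    have : coeff s (homogeneousComponent (d+1) Q) = 0 := by rw [h]; simp
    rw [coeff_homogeneousComponent, if_pos] at this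
    · exact (mem_support_iff.1 hs) this
    · have h5 : Q.totalDegree = s.degree := hs'
      rw [← h5, hd]
  obtain ⟨v, hv⟩ : ∃ v, eval v (homogeneousComponent (d+1) Q) ≠ 0 := by
    by_contra hcon
    push Not at hcon
    exact hQd0 (MvPolynomial.funext (by simpa using hcon))
  have hhom : ∀ u : Fin (k+1) → ℂ, eval u (homogeneousComponent (d+1) Q) =
      ∑ s ∈ Q.support with s.degree = d+1, coeff s Q * ∏ i, u i ^ s i := by
    intro u
    rw [homogeneousComponent_apply, map_sum]
    refine Finset.sum_congr rfl fun s _ => ?_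
    rw [eval_monomial, Finsupp.prod_fintype]; simp
  obtain ⟨j, hj⟩ : ∃ j, v j ≠ 0 := by
    by_contra hcon
    push Not at hcon
    apply hv
    rw [hhom]
    refine Finset.sum_eq_zero fun s hs => ?_
    have hs : s.degree = d+1 := (Finset.mem_filter.1 hs).2
    obtain ⟨i, hi⟩ : ∃ i, s i ≠ 0 := by
      by_contra hc
      push Not at hc
      have : s = 0 := by ext i; simp [hc i]
      rw [this] at hs; simp at hs
    rw [Finset.prod_eq_zero (Finset.mem_univ i), mul_zero]
    rw [hcon i, zero_pow hi]
  set w : Fin (k+1) → ℂ := fun i => v i / v j with hw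
  have hwne : eval w (homogeneousComponent (d+1) Q) ≠ 0 := by
    intro h0
    apply hv
    have : eval v (homogeneousComponent (d+1) Q) =
        v j ^ (d+1) * eval w (homogeneousComponent (d+1) Q) := by
      rw [hhom, hhom, Finset.mul_sum]
      refine Finset.sum_congr rfl fun s hs => ?_
      have hs : s.degree = d+1 := (Finset.mem_filter.1 hs).2
      rw [← hs, Finsupp.degree_eq_sum, ← Finset.prod_pow_eq_pow_sum, mul_left_comm,
        ← Finset.prod_mul_distrib]
      congr 1
      refine Finset.prod_congr rfl fun i _ => ?_
      rw [← mul_pow, hw]; congr 1; field_simp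
    rw [this, h0, mul_zero]
  set t := x j with ht
  set x' : Fin k → A := fun i => x (j.succAbove i) - w (j.succAbove i) • t with hx'
  have hmem : ∀ i, x i - w i • t ∈ XX x' := by
    intro i
    rcases eq_or_ne i j with rfl | hij
    · have : w i = 1 := by simp [hw, hj]
      rw [this]; simp [ht]
    · obtain ⟨l, rfl⟩ := Fin.exists_succAbove_eq hij
      exact mem_XX x' l
  have hstep := step_aux x w t (XX x) (XX x') (mem_XX x) (mem_XX x j) hmem
  refine ⟨x', fun i => ?_, d, ?_⟩
  · exact Submodule.sub_mem _ (Submodule.subset_span ⟨_, rfl⟩)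
      (Submodule.smul_mem _ _ (Submodule.subset_span ⟨_, rfl⟩))
  have htd : t ^ (d+1) ∈ XX x' * XX x ^ d := by
    have e1 : aeval x Q - eval w (homogeneousComponent (d+1) Q) • t ^ (d+1) ∈ XX x' * XX x ^ d := by
      rw [hhom, aeval_def, eval₂_eq', Finset.sum_filter, Finset.sum_smul, ← Finset.sum_sub_distrib]
      refine Submodule.sum_mem _ fun s hs => ?_
      have hsd : s.degree ≤ d + 1 := by
        have := le_totalDegree hs
        rw [hd] at this; exact this
      obtain ⟨h1, h2⟩ := hstep (Finsupp.toMultiset s)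
      rw [toMultiset_map_prod, toMultiset_map_prod, card_toMultiset'] at h1
      rw [toMultiset_map_prod, card_toMultiset'] at h2
      split_ifs with h
      · rw [h, Nat.add_sub_cancel] at h1
        rw [← Algebra.smul_def, mul_smul, ← smul_sub]
        exact Submodule.smul_mem _ _ h1
      · rw [zero_smul, sub_zero, ← Algebra.smul_def]
        refine Submodule.smul_mem _ _ ?_
        have h3 := pow_mono_one (one_mem_XX x) (show s.degree ≤ d by omega) h2
        have := Submodule.mul_mem_mul (one_mem_XX x') h3
        rwa [one_mul] at this
    rw [hQ0, zero_sub, Submodule.neg_mem_iff] at e1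
    have := Submodule.smul_mem _ (eval w (homogeneousComponent (d+1) Q))⁻¹ e1
    rwa [smul_smul, inv_mul_cancel₀ hwne, one_smul] at this
  have hXle : XX x ≤ XX x' ⊔ Submodule.span ℂ {t} := by
    refine XX_le_of (Submodule.mem_sup_left (one_mem_XX x')) fun i => ?_
    have : x i = (x i - w i • t) + w i • t := by abel
    rw [this]
    exact Submodule.add_mem_sup (hmem i)
      (Submodule.smul_mem _ _ (Submodule.mem_span_singleton_self t))
  refine (pow_succ_le_aux (XX x) (XX x') t (mem_XX x j) hXle d).trans ?_
  rw [mul_comm (XX x ^ d)]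
  exact sup_le le_rfl (by simpa using htd)

lemma noether [Nontrivial A] : ∀ {k : ℕ} (x : Fin k → A),
    ∃ (e : ℕ) (y : Fin e → A), (∀ i, y i ∈ Submodule.span ℂ (Set.range x)) ∧
      AlgebraicIndependent ℂ y ∧ ∃ G, (XX x)^(G+1) ≤ (XX x)^G * XX y := by
  intro k
  induction k with
  | zero =>
    intro x
    refine ⟨0, x, fun i => i.elim0, ?_, 0, by simp⟩
    rw [algebraicIndependent_empty_type_iff]
    exact (algebraMap ℂ A).injective
  | succ k ih =>
    intro x
    by_cases hx : AlgebraicIndependent ℂ x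
    · exact ⟨k+1, x, fun i => Submodule.subset_span ⟨i, rfl⟩, hx, 0, by simp⟩
    · obtain ⟨x', hx', G, hG⟩ := noether_step x hx
      obtain ⟨e, y, hy, hyi, G', hG'⟩ := ih x'
      have hX' : XX x' ≤ XX x := XX_le_of (one_mem_XX x) (fun i => span_le_XX x (hx' i))
      refine ⟨e, y, fun i => ?_, hyi, G + G', ?_⟩
      · exact (Submodule.span_le.2 (by rintro _ ⟨i, rfl⟩; exact hx' i) : _ ≤ _) (hy i)
      · have key : ∀ j, XX x ^ (G + j) ≤ XX x ^ G * XX x' ^ j := by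
          intro j
          induction j with
          | zero => simp
          | succ j ihj =>
            calc XX x ^ (G + (j+1)) = XX x ^ (G + j) * XX x := by rw [← add_assoc, pow_succ]
              _ ≤ (XX x ^ G * XX x' ^ j) * XX x := mul_le_mul' ihj le_rfl
              _ = XX x ^ (G+1) * XX x' ^ j := by rw [pow_succ, mul_right_comm]
              _ ≤ (XX x ^ G * XX x') * XX x' ^ j := mul_le_mul' hG le_rfl
              _ = _ := by rw [pow_succ, mul_assoc, mul_comm (XX x')]
        calc XX x ^ (G + G' + 1) ≤ XX x ^ G * XX x' ^ (G'+1) := by rw [add_assoc]; exact key _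
          _ ≤ XX x ^ G * (XX x' ^ G' * XX y) := mul_le_mul' le_rfl hG'
          _ ≤ XX x ^ G * (XX x ^ G' * XX y) := mul_le_mul' le_rfl
              (mul_le_mul' (pow_le_pow_left' hX' _) le_rfl)
          _ = _ := by rw [pow_add, mul_assoc]

end NN
end Part1

section Part2

/-- number of monomials of degree at most `T` in `e` variables -/
def bb (e T : ℕ) : ℕ := (T + e).choose e

lemma bb_pos (e T : ℕ) : 0 < bb e T := Nat.choose_pos (by omega)

lemma bb_zero (T : ℕ) : bb 0 T = 1 := by simp [bb]

lemma bb_succ (e T : ℕ) : bb (e+1) (T+1) = bb (e+1) T + bb e (T+1) := by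
  unfold bb
  have : T + 1 + (e+1) = (T + 1 + e) + 1 := by omega
  rw [this, Nat.choose_succ_succ, add_comm]
  congr 2; omega

lemma bb_mono (e : ℕ) {T T' : ℕ} (h : T ≤ T') : bb e T ≤ bb e T' :=
  Nat.choose_le_choose _ (by omega)

lemma bb_le (e T : ℕ) : bb e T ≤ (T+1)^e := by
  induction e with
  | zero => simp [bb]
  | succ e ih =>
    have h := Nat.add_one_mul_choose_eq (T+e) e
    unfold bb at *
    have h2 : (T + (e+1)).choose (e+1) * (e+1) ≤ (T+1)^(e+1) * (e+1) := by
      have : T + (e+1) = T + e + 1 := by omega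
      rw [this, ← h, pow_succ]
      calc (T+e+1) * (T+e).choose e ≤ ((T+1) * (e+1)) * (T+1)^e :=
            Nat.mul_le_mul (by nlinarith) ih
        _ = _ := by ring
    exact Nat.le_of_mul_le_mul_right h2 (by omega)

lemma le_bb (e T : ℕ) : ((T:ℝ)+1)^e ≤ e.factorial * bb e T := by
  have := Nat.pow_le_choose (α := ℝ) e (T+e)
  have h : T + e + 1 - e = T + 1 := by omega
  rw [h, div_le_iff₀ (by positivity)] at this
  push_cast at this
  unfold bb
  linarith

lemma bb_add_le (e T j : ℕ) : bb (e+1) (T+j) ≤ bb (e+1) T + j * (T+j+1)^e := by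
  induction j with
  | zero => simp
  | succ j ih =>
    rw [← add_assoc, bb_succ]
    have h1 := bb_le e (T+j+1)
    have h2 : (T+j+1)^e ≤ (T+j+1+1)^e := Nat.pow_le_pow_left (by omega) _
    nlinarith

lemma finite_degree_le (e T : ℕ) : {s : Fin e →₀ ℕ | s.degree ≤ T}.Finite :=
  Finsupp.finite_of_degree_le T

lemma ncard_degree_le (e T : ℕ) : {s : Fin e →₀ ℕ | s.degree ≤ T}.ncard = (e+T).choose T := by
  induction T with
  | zero =>
    have : {s : Fin e →₀ ℕ | s.degree ≤ 0} = {0} := by ext s; simp [Finsupp.degree_eq_zero_iff]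
    rw [this]; simp
  | succ T ih =>
    have : {s : Fin e →₀ ℕ | s.degree ≤ T+1} = {s : Fin e →₀ ℕ | s.degree ≤ T} ∪
      ((Finset.univ : Finset (Fin e)).finsuppAntidiag (T+1) : Set (Fin e →₀ ℕ)) := by
      ext s
      simp only [Set.mem_ofPred_eq, Set.mem_union, Finset.mem_coe, Finset.mem_finsuppAntidiag,
        Finset.subset_univ, and_true, Finsupp.degree_eq_sum]
      change _ ↔ _ ∨ ∑ i, s i = T + 1
      omega
    rw [this, Set.ncard_union_eq _ (finite_degree_le e T) (Finset.finite_toSet _), ih,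
      Set.ncard_coe_finset, Finset.card_finsuppAntidiag_nat_eq_choose]
    · simp only [Finset.card_univ, Fintype.card_fin]
      rw [← add_assoc e, Nat.choose_succ_succ]
      simp
    · rw [Set.disjoint_left]
      intro s hs hs'
      simp only [Set.mem_ofPred_eq, Finset.mem_coe, Finset.mem_finsuppAntidiag,
        Finset.subset_univ, and_true, Finsupp.degree_eq_sum] at hs hs'
      have hs'' : ∑ i, s i = T + 1 := hs'
      omega

lemma restrictTotalDegree_eq (e T : ℕ) :
    restrictTotalDegree (Fin e) ℂ T = restrictSupport ℂ {s : Fin e →₀ ℕ | s.degree ≤ T} := by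
  ext p
  rw [mem_restrictTotalDegree, mem_restrictSupport_iff]
  constructor
  · intro h s hs
    exact (le_totalDegree hs).trans h
  · intro h
    exact Finset.sup_le fun s hs => h hs

lemma finrank_restrict (e T : ℕ) :
    Module.finrank ℂ (restrictTotalDegree (Fin e) ℂ T) = bb e T := by
  rw [restrictTotalDegree_eq]
  rw [Module.finrank_eq_nat_card_basis (basisRestrictSupport ℂ _)]
  have := ncard_degree_le e T
  rw [← Nat.card_coe_set_eq] at this
  rw [this, bb, add_comm T, Nat.choose_symm_add]

end Part2

section Part3

lemma XX_pow_eq {A : Type*} [CommRing A] [Algebra ℂ A] {k : ℕ} (x : Fin k → A) (T : ℕ) :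
    (XX x)^T = (restrictTotalDegree (Fin k) ℂ T).map (aeval x).toLinearMap := by
  apply le_antisymm
  · induction T with
    | zero =>
      rw [pow_zero, Submodule.one_le]
      exact ⟨1, (mem_restrictTotalDegree _ _ _).2 (by simp), by simp⟩
    | succ T ih =>
      rw [pow_succ]
      refine (mul_le_mul' ih le_rfl).trans ?_
      rw [Submodule.mul_le]
      rintro _ ⟨p, hp, rfl⟩ b hb
      have hb' : b ∈ (restrictTotalDegree (Fin k) ℂ 1).map (aeval x).toLinearMap := by
        revert b
        change XX x ≤ _
        refine XX_le_of ⟨1, (mem_restrictTotalDegree _ _ _).2 (by simp), by simp⟩ fun i =>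
          ⟨X i, (mem_restrictTotalDegree _ _ _).2 (by simp), by simp⟩
      obtain ⟨q, hq, rfl⟩ := hb'
      refine ⟨p * q, ?_, by simp⟩
      rw [SetLike.mem_coe, mem_restrictTotalDegree] at *
      exact (totalDegree_mul _ _).trans (by omega)
  · rintro _ ⟨p, hp, rfl⟩
    rw [SetLike.mem_coe, mem_restrictTotalDegree] at hp
    simp only [AlgHom.toLinearMap_apply, aeval_def, eval₂_eq']
    refine Submodule.sum_mem _ fun s hs => ?_
    rw [← Algebra.smul_def]
    refine Submodule.smul_mem _ _ ?_
    have hsd : s.degree ≤ T := (le_totalDegree hs).trans hp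
    refine pow_mono_one (one_mem_XX x) hsd ?_
    rw [← card_toMultiset', ← toMultiset_map_prod]
    generalize Finsupp.toMultiset s = u
    induction u using Multiset.induction_on with
    | empty => simpa using ⟨1, map_one _⟩
    | cons i u ih =>
      simp only [Multiset.map_cons, Multiset.prod_cons, Multiset.card_cons]
      rw [pow_succ']
      exact Submodule.mul_mem_mul (mem_XX x i) ih

lemma aeval_mem_pow {A : Type*} [CommRing A] [Algebra ℂ A] {k : ℕ} {x : Fin k → A}
    {Z : Submodule ℂ A} (h1 : 1 ∈ Z) (h : ∀ i, x i ∈ Z) {T : ℕ} {p : MvPolynomial (Fin k) ℂ}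
    (hp : p.totalDegree ≤ T) : aeval x p ∈ Z^T := by
  refine pow_le_pow_left' (XX_le_of h1 h) T ?_
  rw [XX_pow_eq]
  exact ⟨p, (mem_restrictTotalDegree _ _ _).2 hp, rfl⟩

section shift
variable {e : ℕ} (c : Fin e → ℂ)

/-- shift -/
def sh : MvPolynomial (Fin e) ℂ →ₐ[ℂ] MvPolynomial (Fin e) ℂ := aeval (fun i => X i + C (c i))

lemma sh_sh (p : MvPolynomial (Fin e) ℂ) : sh (-c) (sh c p) = p := by
  have : (sh (-c)).comp (sh c) = AlgHom.id ℂ _ := by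
    ext1 i; simp [sh, algHom_C]
  exact DFunLike.congr_fun this p

lemma totalDegree_sh_le (p : MvPolynomial (Fin e) ℂ) : (sh c p).totalDegree ≤ p.totalDegree := by
  have h : sh c p ∈ (XX (X : Fin e → MvPolynomial (Fin e) ℂ))^(p.totalDegree) := by
    refine aeval_mem_pow (one_mem_XX _) (fun i => ?_) le_rfl
    refine Submodule.add_mem _ (mem_XX _ i) ?_
    have := Submodule.smul_mem _ (c i) (one_mem_XX (X : Fin e → MvPolynomial (Fin e) ℂ))
    rwa [smul_eq_C_mul, mul_one] at this
  rw [XX_pow_eq] at h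
  obtain ⟨q, hq, hq'⟩ := h
  rw [SetLike.mem_coe, mem_restrictTotalDegree] at hq
  simp at hq'
  rwa [← hq']

lemma coeff_zero_sh (p : MvPolynomial (Fin e) ℂ) : coeff 0 (sh c p) = eval c p := by
  have : (aeval (0 : Fin e → ℂ)).comp (sh c) = aeval c := by
    ext i; simp [sh]
  have h2 := DFunLike.congr_fun this p
  simp only [AlgHom.comp_apply, aeval_eq_eval] at h2
  rw [← constantCoeff_eq]
  simpa [eval_zero'] using h2

/-- order at least `j` at `c` -/
def JJ (j : ℕ) : Ideal (MvPolynomial (Fin e) ℂ) := (idealOfVars (Fin e) ℂ ^ j).comap (sh c)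

lemma mem_JJ (j : ℕ) (p) : p ∈ JJ c j ↔ ∀ s, Finsupp.degree s < j → coeff s (sh c p) = 0 := by
  rw [JJ, Ideal.mem_comap, mem_pow_idealOfVars_iff']

lemma JJ_pow_le (j k : ℕ) : JJ c j ^ k ≤ JJ c (j * k) := by
  unfold JJ
  refine (Ideal.le_comap_pow _ _).trans ?_
  rw [pow_mul]

lemma JJ_eq_zero {j : ℕ} {p} (h : p ∈ JJ c j) (hp : p.totalDegree < j) : p = 0 := by
  have : sh c p = 0 := by
    ext s
    by_cases hs : Finsupp.degree s < j
    · rw [(mem_JJ c j p).1 h s hs]; simp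
    · rw [coeff_zero]
      apply coeff_eq_zero_of_totalDegree_lt
      have h1 := totalDegree_sh_le c p
      have : Finsupp.degree s = ∑ i ∈ s.support, s i := rfl
      omega
  rw [← sh_sh c p, this, map_zero]

lemma JJ_cancel {j : ℕ} {h p} (hh : eval c h ≠ 0) (hp : h * p ∈ JJ c j) : p ∈ JJ c j := by
  unfold JJ at *
  rw [Ideal.mem_comap, map_mul] at *
  have key : ∀ i ≤ j, sh c p ∈ idealOfVars (Fin e) ℂ ^ i := by
    intro i
    induction i with
    | zero => simp
    | succ i ih =>
      intro hi
      have h1 := ih (by omega)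
      have h2 : C (eval c h) - sh c h ∈ idealOfVars (Fin e) ℂ := by
        rw [← pow_one (idealOfVars _ _), mem_pow_idealOfVars_iff']
        intro s hs
        have : s = 0 := by
          rw [← Finsupp.degree_eq_zero_iff]; omega
        rw [this, coeff_sub, coeff_zero_sh, coeff_zero_C, sub_self]
      have h3 : C (eval c h) * sh c p ∈ idealOfVars (Fin e) ℂ ^ (i+1) := by
        have : C (eval c h) * sh c p = (C (eval c h) - sh c h) * sh c p + sh c h * sh c p := by ring
        rw [this]
        refine Ideal.add_mem _ ?_ (Ideal.pow_le_pow_right hi hp)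
        rw [pow_succ']
        exact Ideal.mul_mem_mul h2 h1
      have h4 := Ideal.mul_mem_left _ (C (eval c h)⁻¹) h3
      rwa [← mul_assoc, ← C_mul, inv_mul_cancel₀ hh, C_1, one_mul] at h4
  exact key j le_rfl

/-- Taylor coefficients of degree at most m. -/
def taylor (m : ℕ) : MvPolynomial (Fin e) ℂ →ₗ[ℂ] ({s : Fin e →₀ ℕ | s.degree ≤ m} → ℂ) :=
  LinearMap.pi fun s => (lcoeff ℂ s.1).comp (sh c).toLinearMap

lemma taylor_zero {m : ℕ} {p} (h : taylor c m p = 0) : p ∈ JJ c (m+1) := by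
  rw [mem_JJ]
  intro s hs
  exact congr_fun h ⟨s, by simpa using Nat.lt_succ_iff.1 hs⟩

instance (m : ℕ) : Finite ({s : Fin e →₀ ℕ | s.degree ≤ m}) := (finite_degree_le e m)

lemma finrank_taylor (m : ℕ) :
    Module.finrank ℂ ({s : Fin e →₀ ℕ | s.degree ≤ m} → ℂ) = bb e m := by
  have := Fintype.ofFinite ({s : Fin e →₀ ℕ | s.degree ≤ m})
  rw [Module.finrank_pi, ← Nat.card_eq_fintype_card, Nat.card_coe_set_eq, ncard_degree_le, bb,
    add_comm m, Nat.choose_symm_add]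
end shift
end Part3

section Part4

section US
variable {e : ℕ} {A : Type*} [CommRing A] [IsDomain A] [Algebra ℂ A]
  [Algebra (MvPolynomial (Fin e) ℂ) A] [IsScalarTower ℂ (MvPolynomial (Fin e) ℂ) A]
  [FaithfulSMul (MvPolynomial (Fin e) ℂ) A]

/-- Linear Noether normalisation data. -/
structure NND (e : ℕ) {A : Type*} [CommRing A] [Algebra ℂ A]
    [Algebra (MvPolynomial (Fin e) ℂ) A] (Z : Submodule ℂ A) (G : ℕ) : Prop where
  one : 1 ∈ Z
  fg : Z.FG
  y : ∀ i : Fin e, algebraMap (MvPolynomial (Fin e) ℂ) A (X i) ∈ Z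
  gen : Z ^ (G+1) ≤ Z ^ G * XX (fun i : Fin e => algebraMap (MvPolynomial (Fin e) ℂ) A (X i))
  top : ∀ a, ∃ m, a ∈ Z ^ m

lemma aeval_algMap (p : MvPolynomial (Fin e) ℂ) :
    aeval (fun i : Fin e => algebraMap (MvPolynomial (Fin e) ℂ) A (X i)) p
      = algebraMap (MvPolynomial (Fin e) ℂ) A p := by
  have : aeval (fun i : Fin e => algebraMap (MvPolynomial (Fin e) ℂ) A (X i))
      = IsScalarTower.toAlgHom ℂ (MvPolynomial (Fin e) ℂ) A := by
    ext1 i; simp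
  rw [this]; rfl

lemma NND.le {Z : Submodule ℂ A} {G : ℕ} (H : NND e Z G) (q : ℕ) :
    Z ^ q ≤ Z ^ G * (XX (fun i : Fin e => algebraMap (MvPolynomial (Fin e) ℂ) A (X i))) ^ q := by
  have key : Z ^ (G + q) ≤ Z ^ G *
      (XX (fun i : Fin e => algebraMap (MvPolynomial (Fin e) ℂ) A (X i))) ^ q := by
    induction q with
    | zero => simp
    | succ q ih =>
      rw [← add_assoc, pow_succ]
      refine (mul_le_mul' ih le_rfl).trans ?_
      rw [mul_right_comm, ← pow_succ]
      refine (mul_le_mul' H.gen le_rfl).trans ?_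
      rw [pow_succ, mul_assoc, mul_comm (XX _)]
  exact (pow_mono_one H.one (by omega)).trans key

/-- combos with coefficients of bounded degree -/
def UUm (e : ℕ) {A : Type*} [CommRing A] [Algebra ℂ A]
    [Algebra (MvPolynomial (Fin e) ℂ) A] [IsScalarTower ℂ (MvPolynomial (Fin e) ℂ) A]
    {s : ℕ} (g : Fin s → A) (T : ℕ) : (Fin s → restrictTotalDegree (Fin e) ℂ T) →ₗ[ℂ] A :=
  ((Fintype.linearCombination (MvPolynomial (Fin e) ℂ) g).restrictScalars ℂ).comp
    ((restrictTotalDegree (Fin e) ℂ T).subtype.compLeft (Fin s))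

/-- its range -/
def UU (e : ℕ) {A : Type*} [CommRing A] [Algebra ℂ A]
    [Algebra (MvPolynomial (Fin e) ℂ) A] [IsScalarTower ℂ (MvPolynomial (Fin e) ℂ) A]
    {s : ℕ} (g : Fin s → A) (T : ℕ) : Submodule ℂ A := LinearMap.range (UUm e g T)

lemma mem_UU {s : ℕ} {g : Fin s → A} {T : ℕ} {a : A} : a ∈ UU e g T ↔
    ∃ b : Fin s → MvPolynomial (Fin e) ℂ, (∀ i, (b i).totalDegree ≤ T) ∧ ∑ i, b i • g i = a := by
  constructor
  · rintro ⟨b, rfl⟩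
    refine ⟨fun i => (b i).1, fun i => (mem_restrictTotalDegree _ _ _).1 (b i).2, ?_⟩
    simp [UUm, Fintype.linearCombination_apply]
  · rintro ⟨b, hb, rfl⟩
    refine ⟨fun i => ⟨b i, (mem_restrictTotalDegree _ _ _).2 (hb i)⟩, ?_⟩
    simp [UUm, Fintype.linearCombination_apply]

lemma finrank_pi_restrict (s T : ℕ) :
    Module.finrank ℂ (Fin s → restrictTotalDegree (Fin e) ℂ T) = s * bb e T := by
  rw [Module.finrank_pi_fintype]; simp [finrank_restrict]

instance {s : ℕ} {g : Fin s → A} {T : ℕ} : Module.Finite ℂ (UU e g T) := by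
  unfold UU; infer_instance

lemma finrank_UU_le {s : ℕ} (g : Fin s → A) (T : ℕ) :
    Module.finrank ℂ (UU e g T) ≤ s * bb e T := by
  rw [← finrank_pi_restrict]
  exact LinearMap.finrank_range_le _

lemma finrank_UU {s : ℕ} {g : Fin s → A} (hg : LinearIndependent (MvPolynomial (Fin e) ℂ) g)
    (T : ℕ) : Module.finrank ℂ (UU e g T) = s * bb e T := by
  rw [← finrank_pi_restrict]
  apply LinearMap.finrank_range_of_inj
  intro a b hab
  have h2 := hg.fintypeLinearCombination_injective hab
  ext i : 1
  exact Subtype.ext (congr_fun h2 i)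

lemma UU_mono {s : ℕ} (g : Fin s → A) {T T' : ℕ} (h : T ≤ T') : UU e g T ≤ UU e g T' := by
  intro a
  rw [mem_UU, mem_UU]
  rintro ⟨b, hb, rfl⟩
  exact ⟨b, fun i => (hb i).trans h, rfl⟩

lemma UU_le {Z : Submodule ℂ A} {G : ℕ} (H : NND e Z G) {s : ℕ} {g : Fin s → A} {m : ℕ}
    (hg : ∀ i, g i ∈ Z ^ m) (T : ℕ) : UU e g T ≤ Z ^ (m + T) := by
  intro a
  rw [mem_UU]
  rintro ⟨b, hb, rfl⟩
  refine Submodule.sum_mem _ fun i _ => ?_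
  rw [Algebra.smul_def, mul_comm, pow_add]
  refine Submodule.mul_mem_mul (hg i) ?_
  rw [← aeval_algMap]
  exact aeval_mem_pow H.one H.y (hb i)

lemma NND.finite {Z : Submodule ℂ A} {G : ℕ} (H : NND e Z G) (m : ℕ) : Module.Finite ℂ ↥(Z ^ m) :=
  Module.Finite.iff_fg.2 (H.fg.pow m)

lemma lower {Z : Submodule ℂ A} {G : ℕ} (H : NND e Z G) {s : ℕ} {g : Fin s → A} {m : ℕ}
    (hg : ∀ i, g i ∈ Z ^ m) (hgi : LinearIndependent (MvPolynomial (Fin e) ℂ) g) (T : ℕ) :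
    s * bb e T ≤ Module.finrank ℂ ↥(Z ^ (m + T)) := by
  have := H.finite (m+T)
  rw [← finrank_UU hgi]
  exact Submodule.finrank_mono (UU_le H hg T)

lemma exists_basis {W : Submodule ℂ A} (hW : W.FG) :
    ∃ (s : ℕ) (g : Fin s → A), LinearIndependent (MvPolynomial (Fin e) ℂ) g ∧ (∀ i, g i ∈ W) ∧
      ∃ h : MvPolynomial (Fin e) ℂ, h ≠ 0 ∧
        ∀ w ∈ W, h • w ∈ Submodule.span (MvPolynomial (Fin e) ℂ) (Set.range g) := by
  classical
  obtain ⟨S, rfl⟩ := hW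
  obtain ⟨I, hI, hI'⟩ := exists_maximal_linearIndepOn (MvPolynomial (Fin e) ℂ)
    (fun i : S => (i : A))
  have := Fintype.ofFinite I
  let E : Fin (Fintype.card I) ≃ I := (Fintype.equivFin I).symm
  have hrange : Set.range (fun i => ((E i).1 : A)) = (fun i : S => (i : A)) '' I := by
    ext a; constructor
    · rintro ⟨i, rfl⟩
      exact ⟨(E i).1, (E i).2, rfl⟩
    · rintro ⟨i, hi, rfl⟩
      exact ⟨E.symm ⟨i, hi⟩, by simp⟩
  have hex : ∀ i : S, ∃ a : MvPolynomial (Fin e) ℂ, a ≠ 0 ∧ a • (i : A) ∈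
      Submodule.span (MvPolynomial (Fin e) ℂ) ((fun i : S => (i : A)) '' I) := by
    intro i
    by_cases hi : i ∈ I
    · exact ⟨1, one_ne_zero, by rw [one_smul]; exact Submodule.subset_span ⟨i, hi, rfl⟩⟩
    · exact hI' i hi
  choose a ha ha' using hex
  refine ⟨Fintype.card I, fun i => ((E i).1 : A), ?_, ?_, ∏ i, a i, ?_, ?_⟩
  · exact hI.comp E E.injective
  · intro i
    exact Submodule.subset_span (E i).1.2
  · exact Finset.prod_ne_zero_iff.2 fun i _ => ha i
  · rw [hrange]
    intro w hw
    induction hw using Submodule.span_induction with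
    | mem x hx =>
      rw [← Finset.prod_erase_mul _ _ (Finset.mem_univ (⟨x, hx⟩ : S)), mul_smul]
      exact Submodule.smul_mem _ _ (ha' ⟨x, hx⟩)
    | zero => simp
    | add x y _ _ hx hy => rw [smul_add]; exact Submodule.add_mem _ hx hy
    | smul c x _ hx =>
      rw [smul_comm]
      exact Submodule.smul_of_tower_mem _ c hx

lemma upper {Z : Submodule ℂ A} {G : ℕ} (H : NND e Z G) {s : ℕ} {g : Fin s → A}
    {h : MvPolynomial (Fin e) ℂ} (hh : h ≠ 0)
    (hg : ∀ w ∈ Z ^ G, h • w ∈ Submodule.span (MvPolynomial (Fin e) ℂ) (Set.range g)) :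
    ∃ M, ∀ q, Module.finrank ℂ ↥(Z ^ q) ≤ s * bb e (q + M) := by
  classical
  obtain ⟨S, hS⟩ := H.fg.pow G
  have h1 : ∀ w : S, ∃ T, h • (w : A) ∈ UU e g T := by
    intro w
    have := hg w (hS ▸ Submodule.subset_span w.2)
    rw [Submodule.mem_span_range_iff_exists_fun] at this
    obtain ⟨b, hb⟩ := this
    exact ⟨Finset.univ.sup fun i => (b i).totalDegree, mem_UU.2 ⟨b, fun i =>
      Finset.le_sup (f := fun i => (b i).totalDegree) (Finset.mem_univ i), hb⟩⟩
  choose T hT using h1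
  set M := Finset.univ.sup T with hM
  refine ⟨M, fun q => ?_⟩
  let μ : A →ₗ[ℂ] A := (LinearMap.lsmul (MvPolynomial (Fin e) ℂ) A h).restrictScalars ℂ
  have hμ : Function.Injective μ := by
    intro a b hab
    change h • a = h • b at hab
    rw [Algebra.smul_def, Algebra.smul_def] at hab
    refine mul_left_cancel₀ ?_ hab
    simpa using hh
  have h2 : Z ^ G ≤ (UU e g M).comap μ := by
    rw [← hS, Submodule.span_le]
    intro w hw
    exact UU_mono g (Finset.le_sup (Finset.mem_univ (⟨w, hw⟩ : S))) (hT ⟨w, hw⟩)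
  have h3 : (Z ^ q).map μ ≤ UU e g (q + M) := by
    rw [Submodule.map_le_iff_le_comap]
    refine (H.le q).trans ?_
    rw [Submodule.mul_le]
    intro u hu v hv
    rw [XX_pow_eq] at hv
    obtain ⟨p, hp, rfl⟩ := hv
    rw [SetLike.mem_coe, mem_restrictTotalDegree] at hp
    have hu' : h • u ∈ UU e g M := h2 hu
    rw [mem_UU] at hu'
    obtain ⟨b, hb, hbu⟩ := hu'
    change h • (u * aeval _ p) ∈ UU e g (q + M)
    rw [aeval_algMap, mem_UU]
    refine ⟨fun i => p * b i, fun i => (totalDegree_mul _ _).trans (by have := hb i; omega), ?_⟩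
    simp_rw [mul_smul]
    rw [← Finset.smul_sum, hbu, Algebra.smul_def, Algebra.smul_def, Algebra.smul_def]
    ring
  calc Module.finrank ℂ ↥(Z ^ q) = Module.finrank ℂ ↥((Z ^ q).map μ) :=
        (LinearEquiv.finrank_eq (Submodule.equivMapOfInjective μ hμ _))
    _ ≤ Module.finrank ℂ (UU e g (q+M)) := Submodule.finrank_mono h3
    _ ≤ _ := finrank_UU_le _ _

end US
end Part4

section Part5

section US
variable {e : ℕ} {A : Type*} [CommRing A] [IsDomain A] [Algebra ℂ A]
  [Algebra (MvPolynomial (Fin e) ℂ) A] [IsScalarTower ℂ (MvPolynomial (Fin e) ℂ) A]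
  [FaithfulSMul (MvPolynomial (Fin e) ℂ) A]

/-- numeric contradiction -/
lemma numeric (e m M D : ℕ) (hD : 0 < D)
    (h : ∀ k, 0 < k → D * bb e k + D * bb e ((m+1)*k - 1) ≤ D * bb e ((m+1)*k + M)) : False := by
  have h' : ∀ k, 0 < k → bb e k + bb e ((m+1)*k - 1) ≤ bb e ((m+1)*k + M) := by
    intro k hk
    have := h k hk
    rw [← mul_add] at this
    exact Nat.le_of_mul_le_mul_left this hD
  rcases e with _ | e
  · have := h' 1 one_pos
    simp [bb_zero] at this
  · set c : ℕ := (M+1) * (m + M + 2)^e with hc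
    set F : ℕ := (e+1).factorial with hF
    have hk : 0 < c * F + 1 := by omega
    set k := c * F + 1 with hkk
    have h1 := h' k hk
    have hK : 1 ≤ (m+1) * k := Nat.mul_pos (by omega) hk
    have h2 := bb_add_le e ((m+1)*k - 1) (M+1)
    have e1 : (m+1)*k - 1 + (M+1) = (m+1)*k + M := by omega
    rw [e1] at h2
    have h3 : bb (e+1) k ≤ (M+1) * ((m+1)*k + M + 1)^e := by omega
    have h4 : (m+1)*k + M + 1 ≤ (m+M+2)*k := by nlinarith
    have h5 : bb (e+1) k ≤ c * k^e := by
      refine h3.trans ?_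
      rw [hc, mul_assoc, ← mul_pow]
      exact Nat.mul_le_mul le_rfl (Nat.pow_le_pow_left h4 e)
    have h6 := le_bb (e+1) k
    have h7 : (k+1)^(e+1) ≤ F * bb (e+1) k := by exact_mod_cast h6
    have h8 : (k+1)^(e+1) ≤ F * (c * k^e) := h7.trans (Nat.mul_le_mul le_rfl h5)
    have h9 : k^e * (k+1) ≤ (k+1)^(e+1) := by
      rw [pow_succ]; exact Nat.mul_le_mul (Nat.pow_le_pow_left (by omega) e) le_rfl
    have h10 : k^e * (k+1) ≤ k^e * (F * c) := by
      calc _ ≤ _ := h9.trans h8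
        _ = _ := by ring
    have h11 := Nat.le_of_mul_le_mul_left h10 (by positivity)
    have : k = c * F + 1 := rfl
    nlinarith

lemma exists_vanishing {W : Submodule ℂ A} [Module.Finite ℂ W] {s : ℕ} {g : Fin s → A}
    (hgi : LinearIndependent (MvPolynomial (Fin e) ℂ) g) {h : MvPolynomial (Fin e) ℂ}
    (hg : ∀ w ∈ W, h • w ∈ Submodule.span (MvPolynomial (Fin e) ℂ) (Set.range g))
    (c : Fin e → ℂ) (m : ℕ) (hlt : s * bb e m < Module.finrank ℂ W) :
    ∃ f ∈ W, f ≠ 0 ∧ h • f ∈ (JJ c (m+1)).map (algebraMap (MvPolynomial (Fin e) ℂ) A) := by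
  let μ : W →ₗ[ℂ] Submodule.span (MvPolynomial (Fin e) ℂ) (Set.range g) :=
    { toFun := fun w => ⟨h • (w : A), hg w w.2⟩
      map_add' := fun a b => by ext; simp
      map_smul' := fun a b => Subtype.ext (smul_comm h a (b : A)) }
  let ρ : Submodule.span (MvPolynomial (Fin e) ℂ) (Set.range g) →ₗ[ℂ]
      (Fin s →₀ MvPolynomial (Fin e) ℂ) := hgi.repr.restrictScalars ℂ
  let τ : (Fin s →₀ MvPolynomial (Fin e) ℂ) →ₗ[ℂ]
      (Fin s → ({s : Fin e →₀ ℕ | s.degree ≤ m} → ℂ)) :=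
    LinearMap.pi fun i => (taylor c m).comp (Finsupp.lapply i)
  let Ψ := (τ.comp ρ).comp μ
  have hfr : Module.finrank ℂ (Fin s → ({s : Fin e →₀ ℕ | s.degree ≤ m} → ℂ)) = s * bb e m := by
    rw [Module.finrank_pi_fintype]; simp [finrank_taylor]
  have hker : LinearMap.ker Ψ ≠ ⊥ := LinearMap.ker_ne_bot_of_finrank_lt (by rw [hfr]; exact hlt)
  obtain ⟨f, hf, hf0⟩ := (Submodule.ne_bot_iff _).1 hker
  refine ⟨f, f.2, by simpa using hf0, ?_⟩
  have hz : ∀ i, (hgi.repr (μ f)) i ∈ JJ c (m+1) := by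
    intro i
    apply taylor_zero
    exact congr_fun hf i
  have hsum : h • (f : A) = ∑ i, (hgi.repr (μ f)) i • g i := by
    have := hgi.linearCombination_repr (μ f)
    rw [Finsupp.linearCombination_apply, Finsupp.sum_fintype] at this
    · exact this.symm
    · simp
  rw [hsum]
  refine Ideal.sum_mem _ fun i _ => ?_
  rw [Algebra.smul_def]
  exact Ideal.mul_mem_right _ _ (Ideal.mem_map_of_mem _ (hz i))

lemma span_top {Z : Submodule ℂ A} {G : ℕ} (H : NND e Z G) {s : ℕ} {g : Fin s → A}
    {h : MvPolynomial (Fin e) ℂ}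
    (hg : ∀ w ∈ Z ^ G, h • w ∈ Submodule.span (MvPolynomial (Fin e) ℂ) (Set.range g)) (a : A) :
    h • a ∈ Submodule.span (MvPolynomial (Fin e) ℂ) (Set.range g) := by
  obtain ⟨m, hm⟩ := H.top a
  have := H.le m hm
  rw [XX_pow_eq] at this
  clear hm
  induction this using Submodule.mul_induction_on' with
  | mem_mul_mem u hu v hv =>
    obtain ⟨p, hp, rfl⟩ := hv
    rw [AlgHom.toLinearMap_apply, aeval_algMap, mul_comm, ← Algebra.smul_def, smul_comm]
    exact Submodule.smul_mem _ _ (hg u hu)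
  | add u _ v _ hu hv => rw [smul_add]; exact Submodule.add_mem _ hu hv

lemma not_vanishing {s : ℕ} {g : Fin s → A}
    (hgi : LinearIndependent (MvPolynomial (Fin e) ℂ) g) {h : MvPolynomial (Fin e) ℂ}
    (hg : ∀ a : A, h • a ∈ Submodule.span (MvPolynomial (Fin e) ℂ) (Set.range g))
    {c : Fin e → ℂ} (hc : eval c h ≠ 0) {h1 : MvPolynomial (Fin e) ℂ} (hc1 : eval c h1 ≠ 0)
    {K : ℕ} {a : A} (ha : h1 • a ∈ (JJ c (K+1)).map (algebraMap (MvPolynomial (Fin e) ℂ) A))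
    (haU : a ∈ UU e g K) : a = 0 := by
  rw [mem_UU] at haU
  obtain ⟨b, hb, rfl⟩ := haU
  have h2 : h • (h1 • ∑ i, b i • g i) ∈
      (JJ c (K+1)) • Submodule.span (MvPolynomial (Fin e) ℂ) (Set.range g) := by
    have h3 : h1 • ∑ i, b i • g i ∈ (JJ c (K+1)) • (⊤ : Submodule (MvPolynomial (Fin e) ℂ) A) := by
      rw [Ideal.smul_top_eq_map]; exact ha
    generalize h1 • ∑ i, b i • g i = z at h3
    induction h3 using Submodule.smul_induction_on' with
    | smul r hr n _ =>
      rw [smul_comm]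
      exact Submodule.smul_mem_smul hr (hg n)
    | add x _ y _ hx hy => rw [smul_add]; exact Submodule.add_mem _ hx hy
  rw [Submodule.mem_ideal_smul_span_iff_exists_sum] at h2
  obtain ⟨a', ha', hsum⟩ := h2
  rw [Finsupp.sum_fintype _ _ (by simp)] at hsum
  have h4 : ∀ i, h * h1 * b i = a' i := by
    have := hgi.fintypeLinearCombination_injective (a₁ := fun i => h * h1 * b i)
      (a₂ := fun i => a' i) (by
        simp only [Fintype.linearCombination_apply]
        rw [hsum, Finset.smul_sum, Finset.smul_sum]
        simp only [mul_smul])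
    exact fun i => congr_fun this i
  have h5 : ∀ i, b i = 0 := by
    intro i
    refine JJ_eq_zero c (JJ_cancel c (h := h * h1) ?_ ?_) (Nat.lt_succ_of_le (hb i))
    · rw [map_mul]; exact mul_ne_zero hc hc1
    · rw [h4]; exact ha' i
  simp [h5]

lemma Ustar {Z : Submodule ℂ A} {G : ℕ} (H : NND e Z G) {m s : ℕ} {g : Fin s → A}
    (hgi : LinearIndependent (MvPolynomial (Fin e) ℂ) g) {h1 : MvPolynomial (Fin e) ℂ}
    (hh1 : h1 ≠ 0)
    (hg : ∀ w ∈ Z ^ m, h1 • w ∈ Submodule.span (MvPolynomial (Fin e) ℂ) (Set.range g)) :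
    Module.finrank ℂ ↥(Z ^ m) ≤ s * bb e m := by
  by_contra! hlt
  obtain ⟨D, g', hgi', hgm', h, hh, hg'⟩ := exists_basis (e := e) (H.fg.pow G)
  obtain ⟨M, hM⟩ := upper H hh hg'
  have hg'' := span_top H hg'
  obtain ⟨c, hc⟩ : ∃ c, eval c (h * h1) ≠ 0 := by
    by_contra! hcon
    exact mul_ne_zero hh hh1 (MvPolynomial.funext (by simpa using hcon))
  rw [map_mul] at hc
  have hch := left_ne_zero_of_mul hc
  have hch1 := right_ne_zero_of_mul hc
  have := H.finite m
  obtain ⟨f, hfm, hf0, hf⟩ := exists_vanishing hgi hg c m hlt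
  have hD : 0 < D := by
    rcases Nat.eq_zero_or_pos D with rfl | h0
    · have := hg'' 1
      simp [Algebra.smul_def] at this
      exact absurd this hh
    · exact h0
  refine numeric e m (G + M) D hD fun k hk => ?_
  have hKpos : 0 < (m+1)*k := Nat.mul_pos (by omega) hk
  let μ : A →ₗ[ℂ] A := LinearMap.mulLeft ℂ (f^k)
  have hμ : Function.Injective μ := by
    intro a b hab
    exact mul_left_cancel₀ (pow_ne_zero k hf0) hab
  have hle1 : (Z ^ (k+G)).map μ ≤ Z ^ ((m+1)*k + G) := by
    rintro _ ⟨a, ha, rfl⟩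
    have e1 : (m+1)*k+G = m*k + (k+G) := by ring
    rw [e1, pow_add, pow_mul]
    exact Submodule.mul_mem_mul (Submodule.pow_mem_pow _ hfm k) ha
  have hle2 : UU e g' ((m+1)*k - 1) ≤ Z ^ ((m+1)*k + G) :=
    (UU_le H hgm' _).trans (pow_mono_one H.one (by omega))
  have hdisj : (Z ^ (k+G)).map μ ⊓ UU e g' ((m+1)*k - 1) = ⊥ := by
    rw [eq_bot_iff]
    rintro _ ⟨⟨a, ha, rfl⟩, hU⟩
    rw [Submodule.mem_bot]
    refine not_vanishing hgi' hg'' hch (h1 := h1^k) (by rw [map_pow]; exact pow_ne_zero k hch1)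
      ?_ hU
    have e2 : (m+1)*k - 1 + 1 = (m+1)*k := by omega
    rw [e2]
    have e3 : h1^k • μ a = (h1 • f)^k * a := by
      simp [μ, Algebra.smul_def]; ring
    rw [e3]
    refine Ideal.mul_mem_right _ _ ?_
    have := Ideal.pow_mem_pow hf k
    rw [← Ideal.map_pow] at this
    exact Ideal.map_mono (JJ_pow_le c (m+1) k) this
  have := H.finite ((m+1)*k+G)
  have := H.finite (k+G)
  have hsum := Submodule.finrank_sup_add_finrank_inf_eq ((Z ^ (k+G)).map μ) (UU e g' ((m+1)*k - 1))
  rw [hdisj, finrank_bot, add_zero, finrank_UU hgi',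
    ← (LinearEquiv.finrank_eq (Submodule.equivMapOfInjective μ hμ _))] at hsum
  have h3 := Submodule.finrank_mono (sup_le hle1 hle2)
  have h4 := hM ((m+1)*k+G)
  have h5 := lower H hgm' hgi' k
  rw [add_comm G k] at h5
  rw [add_assoc] at h4
  omega

/-- growth -/
lemma growth {Z : Submodule ℂ A} {G : ℕ} (H : NND e Z G) (m M : ℕ) :
    Module.finrank ℂ ↥(Z ^ m) * bb e M ≤ Module.finrank ℂ ↥(Z ^ (m+M)) * bb e m := by
  obtain ⟨s, g, hgi, hgm, h, hh, hg⟩ := exists_basis (e := e) (H.fg.pow m)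
  have h1 := Ustar H hgi hh hg
  have h2 := lower H hgm hgi M
  calc _ ≤ s * bb e m * bb e M := Nat.mul_le_mul h1 le_rfl
    _ = s * bb e M * bb e m := by ring
    _ ≤ _ := Nat.mul_le_mul h2 le_rfl

lemma one_le_growth {Z : Submodule ℂ A} {G : ℕ} (H : NND e Z G) (M : ℕ) :
    bb e M ≤ Module.finrank ℂ ↥(Z ^ M) := by
  have hgi : LinearIndependent (MvPolynomial (Fin e) ℂ) (fun _ : Fin 1 => (1 : A)) := by
    rw [linearIndependent_unique_iff]; exact one_ne_zero
  have := lower H (m := 0) (g := fun _ : Fin 1 => (1 : A)) (by simpa using ⟨1, map_one _⟩) hgi M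
  rw [one_mul, zero_add] at this
  exact this

end US
end Part5

section Part6

section P6
variable {A : Type} [CommRing A] [IsDomain A] [Algebra ℂ A]

/-- algebra structure given by a tuple -/
@[reducible] def algOf {e : ℕ} (y : Fin e → A) : Algebra (MvPolynomial (Fin e) ℂ) A :=
  (aeval y : MvPolynomial (Fin e) ℂ →ₐ[ℂ] A).toRingHom.toAlgebra

lemma algOf_map {e : ℕ} (y : Fin e → A) (p : MvPolynomial (Fin e) ℂ) :
    @algebraMap _ _ _ _ (algOf y) p = aeval y p := rfl

lemma algOf_tower {e : ℕ} (y : Fin e → A) :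
    @IsScalarTower ℂ (MvPolynomial (Fin e) ℂ) A _ (algOf y).toSMul _ := by
  letI := algOf y
  apply IsScalarTower.of_algebraMap_eq
  intro r
  rw [algOf_map]; simp [MvPolynomial.algebraMap_eq]

lemma algOf_faithful {e : ℕ} (y : Fin e → A) (hy : AlgebraicIndependent ℂ y) :
    @FaithfulSMul (MvPolynomial (Fin e) ℂ) A (algOf y).toSMul := by
  letI := algOf y
  rw [faithfulSMul_iff_algebraMap_injective]
  exact hy

lemma algOf_NND {k : ℕ} (x : Fin k → A) (hx : ∀ a, ∃ p : MvPolynomial (Fin k) ℂ, aeval x p = a)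
    {e : ℕ} (y : Fin e → A) (hys : ∀ i, y i ∈ Submodule.span ℂ (Set.range x)) {G : ℕ}
    (hG : (XX x)^(G+1) ≤ (XX x)^G * XX y) :
    @NND e A _ _ (algOf y) (XX x) G := by
  letI := algOf y
  have hyy : (fun i : Fin e => algebraMap (MvPolynomial (Fin e) ℂ) A (X i)) = y := by
    funext i; rw [algOf_map]; simp
  refine ⟨one_mem_XX x, ?_, ?_, ?_, ?_⟩
  · exact Submodule.fg_span ((Set.finite_range x).insert 1)
  · intro i
    rw [algOf_map, aeval_X]
    exact span_le_XX x (hys i)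
  · rw [hyy]; exact hG
  · intro a
    obtain ⟨p, rfl⟩ := hx a
    exact ⟨p.totalDegree, aeval_mem_pow (one_mem_XX x) (mem_XX x) le_rfl⟩

lemma NND.finiteB {e : ℕ} [Algebra (MvPolynomial (Fin e) ℂ) A]
    [IsScalarTower ℂ (MvPolynomial (Fin e) ℂ) A] [FaithfulSMul (MvPolynomial (Fin e) ℂ) A]
    {Z : Submodule ℂ A} {G : ℕ} (H : NND e Z G) :
    Module.Finite (MvPolynomial (Fin e) ℂ) A := by
  obtain ⟨S, hS⟩ := H.fg.pow G
  refine ⟨S, ?_⟩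
  rw [eq_top_iff]
  intro a _
  obtain ⟨m, hm⟩ := H.top a
  have := H.le m hm
  rw [XX_pow_eq] at this
  have h2 : Z ^ G * (restrictTotalDegree (Fin e) ℂ m).map
      (aeval (fun i : Fin e => algebraMap (MvPolynomial (Fin e) ℂ) A (X i))).toLinearMap ≤
      (Submodule.span (MvPolynomial (Fin e) ℂ) (S : Set A)).restrictScalars ℂ := by
    rw [Submodule.mul_le]
    rintro z hz _ ⟨p, hp, rfl⟩
    have hz' : z ∈ Submodule.span (MvPolynomial (Fin e) ℂ) (S : Set A) := by
      rw [← hS] at hz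
      exact Submodule.span_le_restrictScalars ℂ (MvPolynomial (Fin e) ℂ) _ hz
    show z * (aeval _ p) ∈ _
    rw [aeval_algMap, mul_comm, ← Algebra.smul_def]
    exact Submodule.smul_mem _ p hz'
  exact h2 this

lemma trdeg_eq_of_finite {e : ℕ} [Algebra (MvPolynomial (Fin e) ℂ) A]
    [IsScalarTower ℂ (MvPolynomial (Fin e) ℂ) A]
    [FaithfulSMul (MvPolynomial (Fin e) ℂ) A] [Module.Finite (MvPolynomial (Fin e) ℂ) A] :
    Algebra.trdeg ℂ A = e := by
  have h := _root_.trdeg_add_eq ℂ (MvPolynomial (Fin e) ℂ) (A := A)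
  rw [MvPolynomial.trdeg_of_isDomain] at h
  rw [_root_.trdeg_eq_zero] at h
  simpa using h.symm
end P6

section P6b
variable {n : ℕ}

/-- transcendence degree of the coordinate ring -/
def ee (P : Ideal (MvPolynomial (Fin n) ℂ)) : ℕ :=
  Cardinal.toNat (Algebra.trdeg ℂ (MvPolynomial (Fin n) ℂ ⧸ P))

/-- coordinate functions -/
def cx (P : Ideal (MvPolynomial (Fin n) ℂ)) (i : Fin n) : MvPolynomial (Fin n) ℂ ⧸ P :=
  Ideal.Quotient.mk P (X i)

/-- Hilbert function -/
def HP (P : Ideal (MvPolynomial (Fin n) ℂ)) (m : ℕ) : ℕ :=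
  Module.finrank ℂ ↥((XX (cx P)) ^ m)

lemma aeval_cx (P : Ideal (MvPolynomial (Fin n) ℂ)) (p : MvPolynomial (Fin n) ℂ) :
    aeval (cx P) p = Ideal.Quotient.mk P p := by
  have : aeval (cx P) = Ideal.Quotient.mkₐ ℂ P := by
    ext1 i; simp [cx]
  rw [this]; rfl

lemma cx_surj (P : Ideal (MvPolynomial (Fin n) ℂ)) (a : MvPolynomial (Fin n) ℂ ⧸ P) :
    ∃ p : MvPolynomial (Fin n) ℂ, aeval (cx P) p = a := by
  obtain ⟨p, rfl⟩ := Ideal.Quotient.mk_surjective a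
  exact ⟨p, aeval_cx P p⟩

lemma trdeg_eq_ee (P : Ideal (MvPolynomial (Fin n) ℂ)) [P.IsPrime] :
    Algebra.trdeg ℂ (MvPolynomial (Fin n) ℂ ⧸ P) = ee P := by
  obtain ⟨e, y, hys, hy, G, hG⟩ := noether (cx P)
  letI := algOf y
  haveI := algOf_tower y
  haveI := algOf_faithful y hy
  haveI := (algOf_NND (cx P) (cx_surj P) y hys hG).finiteB
  have := trdeg_eq_of_finite (e := e) (A := MvPolynomial (Fin n) ℂ ⧸ P)
  rw [ee, this]; simp

lemma pkg (P : Ideal (MvPolynomial (Fin n) ℂ)) [P.IsPrime] :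
    ∃ y : Fin (ee P) → MvPolynomial (Fin n) ℂ ⧸ P,
      (∀ i, y i ∈ Submodule.span ℂ (Set.range (cx P))) ∧
      AlgebraicIndependent ℂ y ∧ ∃ G, @NND (ee P) _ _ _ (algOf y) (XX (cx P)) G := by
  obtain ⟨e, y, hys, hy, G, hG⟩ := noether (cx P)
  have he : e = ee P := by
    letI := algOf y
    haveI := algOf_tower y
    haveI := algOf_faithful y hy
    haveI := (algOf_NND (cx P) (cx_surj P) y hys hG).finiteB
    have := trdeg_eq_of_finite (e := e) (A := MvPolynomial (Fin n) ℂ ⧸ P)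
    rw [ee, this]; simp
  generalize ee P = e' at *
  subst he
  exact ⟨y, hys, hy, G, algOf_NND (cx P) (cx_surj P) y hys hG⟩

lemma HP_growth (P : Ideal (MvPolynomial (Fin n) ℂ)) [P.IsPrime] (m M : ℕ) :
    HP P m * bb (ee P) M ≤ HP P (m+M) * bb (ee P) m := by
  obtain ⟨y, hys, hy, G, H⟩ := pkg P
  letI := algOf y
  haveI := algOf_tower y
  haveI := algOf_faithful y hy
  exact growth H m M

lemma HP_ge (P : Ideal (MvPolynomial (Fin n) ℂ)) [P.IsPrime] (M : ℕ) :
    bb (ee P) M ≤ HP P M := by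
  obtain ⟨y, hys, hy, G, H⟩ := pkg P
  letI := algOf y
  haveI := algOf_tower y
  haveI := algOf_faithful y hy
  exact one_le_growth H M

lemma ee_bot : ee (⊥ : Ideal (MvPolynomial (Fin n) ℂ)) = n := by
  have e1 : (MvPolynomial (Fin n) ℂ ⧸ (⊥ : Ideal (MvPolynomial (Fin n) ℂ))) ≃ₐ[ℂ]
    MvPolynomial (Fin n) ℂ := AlgEquiv.quotientBot ℂ _
  rw [ee, e1.trdeg_eq, MvPolynomial.trdeg_of_isDomain]; simp

lemma ee_lt {P Q : Ideal (MvPolynomial (Fin n) ℂ)} [P.IsPrime] [Q.IsPrime] (h : P < Q) :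
    ee Q + 1 ≤ ee P := by
  by_contra! hlt
  obtain ⟨y, hys, hy, G, H⟩ := pkg Q
  let π : (MvPolynomial (Fin n) ℂ ⧸ P) →ₐ[ℂ] (MvPolynomial (Fin n) ℂ ⧸ Q) :=
    Ideal.Quotient.factorₐ ℂ h.le
  have hπ : Function.Surjective π := Ideal.Quotient.factor_surjective h.le
  choose z hz using fun i => hπ (y i)
  have hz' : (π ∘ z) = y := funext hz
  have hzi : AlgebraicIndependent ℂ z := by
    apply AlgebraicIndependent.of_comp π
    rw [hz']; exact hy
  have hb : IsTranscendenceBasis ℂ z := by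
    apply hzi.isTranscendenceBasis_of_trdeg_le_of_finite
    rw [trdeg_eq_ee]
    simp; omega
  letI := algOf z
  haveI := algOf_tower z
  haveI := algOf_faithful z hzi
  have halg : Algebra.IsAlgebraic (MvPolynomial (Fin (ee Q)) ℂ) (MvPolynomial (Fin n) ℂ ⧸ P) := by
    have h3 := hb.isAlgebraic
    refine Algebra.IsAlgebraic.of_ringHom_of_comp_eq hzi.aevalEquiv.toRingEquiv.toRingHom
      (RingHom.id (MvPolynomial (Fin n) ℂ ⧸ P)) hzi.aevalEquiv.surjective
      Function.injective_id ?_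
    ext1 <;> simp [algOf_map] <;> rfl
  obtain ⟨q, hqQ, hqP⟩ := Set.exists_of_ssubset h
  have hker : Ideal.comap (algebraMap (MvPolynomial (Fin (ee Q)) ℂ) _) (RingHom.ker π) ≠ ⊥ := by
    apply Ideal.comap_ne_bot_of_algebraic_mem (x := Ideal.Quotient.mk P q)
    · rwa [Ne, Ideal.Quotient.eq_zero_iff_mem]
    · rw [RingHom.mem_ker]
      show Ideal.Quotient.mk Q q = 0
      rwa [Ideal.Quotient.eq_zero_iff_mem]
    · exact Algebra.IsAlgebraic.isAlgebraic _
  apply hker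
  rw [eq_bot_iff]
  intro p hp
  rw [Ideal.mem_comap, RingHom.mem_ker, algOf_map] at hp
  have : aeval y p = 0 := by
    rw [← hz']
    have h2 : aeval (π ∘ z) p = π (aeval z p) := by
      rw [MvPolynomial.comp_aeval_apply]; rfl
    rw [h2]; exact hp
  exact (AlgebraicIndependent.eq_zero_of_aeval_eq_zero hy p this)

lemma ee_le {P Q : Ideal (MvPolynomial (Fin n) ℂ)} [P.IsPrime] [Q.IsPrime] (h : P ≤ Q) :
    ee Q ≤ ee P := by
  rcases h.eq_or_lt with h | h
  · rw [h]
  · have := ee_lt h; omega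

lemma ee_le_n (P : Ideal (MvPolynomial (Fin n) ℂ)) [P.IsPrime] : ee P ≤ n := by
  have := ee_le (bot_le : (⊥ : Ideal (MvPolynomial (Fin n) ℂ)) ≤ P)
  rwa [ee_bot] at this

lemma HP_eq {P I : Ideal (MvPolynomial (Fin n) ℂ)} (h : P ≤ I) {M : ℕ}
    (hM : ∀ f ∈ I, f.totalDegree ≤ M → f ∈ P) : HP P M = HP I M := by
  let π : (MvPolynomial (Fin n) ℂ ⧸ P) →ₐ[ℂ] (MvPolynomial (Fin n) ℂ ⧸ I) :=
    Ideal.Quotient.factorₐ ℂ h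
  have e1 : (XX (cx I))^M = ((XX (cx P))^M).map π.toLinearMap := by
    rw [XX_pow_eq, XX_pow_eq, ← Submodule.map_comp]
    congr 1
    refine LinearMap.ext fun p => ?_
    simp only [AlgHom.toLinearMap_apply, LinearMap.comp_apply, aeval_cx]
    rfl
  rw [HP, HP, e1]
  let ψ : ↥((XX (cx P))^M) →ₗ[ℂ] (MvPolynomial (Fin n) ℂ ⧸ I) :=
    π.toLinearMap.comp ((XX (cx P))^M).subtype
  have e2 : ((XX (cx P))^M).map π.toLinearMap = LinearMap.range ψ := by
    rw [LinearMap.range_comp, Submodule.range_subtype]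
  rw [e2]
  symm
  apply LinearMap.finrank_range_of_inj
  rw [← LinearMap.ker_eq_bot, LinearMap.ker_eq_bot']
  rintro ⟨a, ha⟩ hk
  rw [Submodule.mk_eq_zero]
  change π a = 0 at hk
  rw [XX_pow_eq] at ha
  obtain ⟨p, hp, rfl⟩ := ha
  rw [SetLike.mem_coe, mem_restrictTotalDegree] at hp
  simp only [AlgHom.toLinearMap_apply, LinearMap.mem_ker, aeval_cx] at hk ⊢
  rw [Ideal.Quotient.eq_zero_iff_mem]
  exact hM p ((Ideal.Quotient.eq_zero_iff_mem).1 hk) hp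

lemma HP_mono (P : Ideal (MvPolynomial (Fin n) ℂ)) {m M : ℕ} (h : m ≤ M) : HP P m ≤ HP P M := by
  have : Module.Finite ℂ ↥((XX (cx P))^M) := by
    have : (XX (cx P)).FG := Submodule.fg_span ((Set.finite_range _).insert 1)
    exact Module.Finite.iff_fg.2 (this.pow M)
  exact Submodule.finrank_mono (pow_mono_one (one_mem_XX _) h)
end P6b
end Part6

section Part7

section P7
variable {n : ℕ}

lemma zl_vi {V : Set (Fin n → ℂ)} (hV : IsAlgebraicSet n V) :
    zeroLocus n (vanishingIdeal n V : Set (MvPolynomial (Fin n) ℂ)) = V := by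
  obtain ⟨S, rfl⟩ := hV
  apply Set.Subset.antisymm
  · intro x hx f hf
    exact hx f (fun y hy => hy f hf)
  · intro x hx f hf
    exact hf x hx

lemma vi_anti {V W : Set (Fin n → ℂ)} (h : V ⊆ W) : vanishingIdeal n W ≤ vanishingIdeal n V :=
  fun f hf x hx => hf x (h hx)

lemma zl_anti {S T : Set (MvPolynomial (Fin n) ℂ)} (h : S ⊆ T) : zeroLocus n T ⊆ zeroLocus n S :=
  fun x hx f hf => hx f (h hf)

lemma vi_prime {V : Set (Fin n → ℂ)} (hV : IsIrredVariety n V) : (vanishingIdeal n V).IsPrime := by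
  obtain ⟨h1, ⟨x, hx⟩, h2⟩ := hV
  refine ⟨?_, ?_⟩
  · intro h
    have : (1 : MvPolynomial (Fin n) ℂ) ∈ vanishingIdeal n V := by rw [h]; trivial
    have := this x hx
    simp at this
  · intro f g hfg
    have := h2 (zeroLocus n {f}) (zeroLocus n {g}) ⟨_, rfl⟩ ⟨_, rfl⟩ (by
      intro y hy
      have := hfg y hy
      rw [map_mul, mul_eq_zero] at this
      rcases this with h | h
      · left; rintro _ rfl; exact h
      · right; rintro _ rfl; exact h)
    rcases this with h | h
    · left; intro y hy; exact h hy f rfl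
    · right; intro y hy; exact h hy g rfl

lemma vi_zl (P : Ideal (MvPolynomial (Fin n) ℂ)) [hP : P.IsPrime] :
    vanishingIdeal n (zeroLocus n (P : Set (MvPolynomial (Fin n) ℂ))) = P := by
  have h := MvPolynomial.vanishingIdeal_zeroLocus_eq_radical (k := ℂ) (K := ℂ) P
  rw [hP.radical] at h
  rw [← h]
  conv_lhs => rw [h]
  rfl

lemma irred_of_prime (P : Ideal (MvPolynomial (Fin n) ℂ)) [hP : P.IsPrime] :
    IsIrredVariety n (zeroLocus n (P : Set (MvPolynomial (Fin n) ℂ))) := by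
  refine ⟨⟨_, rfl⟩, ?_, ?_⟩
  · by_contra h
    rw [Set.not_nonempty_iff_eq_empty] at h
    have h2 := vi_zl P
    apply hP.ne_top
    rw [← h2, h, eq_top_iff]
    intro f _ x hx
    exact hx.elim
  · intro V₁ V₂ h1 h2 hsub
    by_contra! hcon
    obtain ⟨S, rfl⟩ := h1
    obtain ⟨T, rfl⟩ := h2
    obtain ⟨⟨x, hx, hx1⟩, ⟨y, hy, hy1⟩⟩ := And.imp Set.not_subset.1 Set.not_subset.1 hcon
    simp only [zeroLocus, Set.mem_ofPred_eq, not_forall] at hx1 hy1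
    obtain ⟨f, hf, hfx⟩ := hx1
    obtain ⟨g, hg, hgy⟩ := hy1
    have : f * g ∈ vanishingIdeal n (zeroLocus n (P : Set (MvPolynomial (Fin n) ℂ))) := by
      intro z hz
      rw [map_mul]
      rcases hsub hz with h | h
      · rw [h f hf, zero_mul]
      · rw [h g hg, mul_zero]
    rw [vi_zl] at this
    rcases hP.mem_or_mem this with h | h
    · exact hfx (hx f h)
    · exact hgy (hy g h)

/-- specialisation of the first `k` variables -/
def spk (e k : ℕ) : MvPolynomial (Fin e) ℂ →ₐ[ℂ] MvPolynomial (Fin e) ℂ :=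
  aeval (fun i : Fin e => if (i : ℕ) < k then 0 else X i)

lemma spk_le (e k : ℕ) : RingHom.ker (spk e k) ≤ RingHom.ker (spk e (k+1)) := by
  intro p hp
  rw [RingHom.mem_ker] at hp ⊢
  have : spk e (k+1) = (spk e (k+1)).comp (spk e k) := by
    ext1 i
    simp only [spk, AlgHom.comp_apply, aeval_X]
    by_cases h : (i:ℕ) < k
    · have h' : (i:ℕ) < k + 1 := by omega
      simp [h, h']
    · simp [h]
  rw [this, AlgHom.comp_apply, hp, map_zero]

lemma exists_chain_aux {e : ℕ} {A : Type} [CommRing A] [Algebra (MvPolynomial (Fin e) ℂ) A]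
    [Algebra.IsIntegral (MvPolynomial (Fin e) ℂ) A] [FaithfulSMul (MvPolynomial (Fin e) ℂ) A] :
    ∃ F : ℕ → Ideal A, ∀ k, (F k).IsPrime ∧
      (F k).comap (algebraMap (MvPolynomial (Fin e) ℂ) A) = RingHom.ker (spk e k) ∧
      F k ≤ F (k+1) := by
  let T : ℕ → Type := fun k => {Q : Ideal A // Q.IsPrime ∧
    Q.comap (algebraMap (MvPolynomial (Fin e) ℂ) A) = RingHom.ker (spk e k)}
  have base : Nonempty (T 0) := by
    haveI : (RingHom.ker (spk e 0)).IsPrime := RingHom.ker_isPrime _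
    obtain ⟨Q, _, h1, h2⟩ := Ideal.exists_ideal_over_prime_of_isIntegral (S := A)
      (RingHom.ker (spk e 0)) ⊥ (by
        intro p hp
        rw [Ideal.mem_comap, Ideal.mem_bot] at hp
        have : p = 0 := (FaithfulSMul.algebraMap_injective (MvPolynomial (Fin e) ℂ) A)
          (by rw [hp, map_zero])
        rw [this]; exact zero_mem _)
    exact ⟨⟨Q, h1, h2⟩⟩
  have step : ∀ k (Q : T k), ∃ Q' : T (k+1), Q.1 ≤ Q'.1 := by
    rintro k ⟨Q, hQ1, hQ2⟩
    haveI : (RingHom.ker (spk e (k+1))).IsPrime := RingHom.ker_isPrime _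
    obtain ⟨Q', h0, h1, h2⟩ := Ideal.exists_ideal_over_prime_of_isIntegral (S := A)
      (RingHom.ker (spk e (k+1))) Q (by rw [hQ2]; exact spk_le e k)
    exact ⟨⟨Q', h1, h2⟩, h0⟩
  choose nx hnx using step
  let F : ∀ k, T k := fun k => Nat.rec base.some (fun k Q => nx k Q) k
  have hF : ∀ k, (F k).1 ≤ (F (k+1)).1 := fun k => hnx k (F k)
  exact ⟨fun k => (F k).1, fun k => ⟨(F k).2.1, (F k).2.2, hF k⟩⟩

lemma exists_chain (P : Ideal (MvPolynomial (Fin n) ℂ)) [P.IsPrime] :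
    ∃ Q : ℕ → Ideal (MvPolynomial (Fin n) ℂ), (∀ k, (Q k).IsPrime) ∧ (∀ k, P ≤ Q k) ∧
      ∀ k < ee P, Q k < Q (k+1) := by
  obtain ⟨y, hys, hy, G, H⟩ := pkg P
  letI := algOf y
  haveI := algOf_tower y
  haveI := algOf_faithful y hy
  haveI := H.finiteB
  obtain ⟨F, hF⟩ := exists_chain_aux (e := ee P) (A := MvPolynomial (Fin n) ℂ ⧸ P)
  refine ⟨fun k => (F k).comap (Ideal.Quotient.mk P), fun k => ?_, fun k => ?_, fun k hk => ?_⟩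
  · haveI := (hF k).1
    exact Ideal.comap_isPrime _ _
  · intro p hp
    rw [Ideal.mem_comap, Ideal.Quotient.eq_zero_iff_mem.2 hp]
    exact zero_mem _
  · refine lt_of_le_of_ne (Ideal.comap_mono (hF k).2.2) ?_
    intro heq
    have h1 : F k = F (k+1) :=
      Ideal.comap_injective_of_surjective _ Ideal.Quotient.mk_surjective heq
    have h2 : RingHom.ker (spk (ee P) k) = RingHom.ker (spk (ee P) (k+1)) := by
      rw [← (hF k).2.1, ← (hF (k+1)).2.1, h1]
    have h3 : (X ⟨k, hk⟩ : MvPolynomial (Fin (ee P)) ℂ) ∈ RingHom.ker (spk (ee P) (k+1)) := by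
      rw [RingHom.mem_ker, spk, aeval_X]; simp
    rw [← h2, RingHom.mem_ker, spk, aeval_X] at h3
    simp at h3

lemma hasChain_ee {V : Set (Fin n → ℂ)} (hV : IsIrredVariety n V) :
    HasChain n V (ee (vanishingIdeal n V)) := by
  haveI := vi_prime hV
  obtain ⟨Q, h1, h2, h3⟩ := exists_chain (vanishingIdeal n V)
  set e := ee (vanishingIdeal n V)
  have hlt : ∀ k l, k < l → l ≤ e → Q k < Q l := by
    intro k l hkl
    induction l, hkl using Nat.le_induction with
    | base => intro h; exact h3 k (by omega)
    | succ l hl ih => intro h; exact (ih (by omega)).trans (h3 l (by omega))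
  refine ⟨fun i => zeroLocus n (Q (e - i) : Set (MvPolynomial (Fin n) ℂ)), fun i => ?_,
    fun i j hij => ?_, ?_⟩
  · haveI := h1 (e - i)
    exact irred_of_prime _
  · have := hlt (e - j) (e - i) (by omega) (by omega)
    rw [Set.ssubset_iff_subset_ne]
    refine ⟨zl_anti this.le, fun h => this.ne ?_⟩
    dsimp only at h
    haveI := h1 (e - i)
    haveI := h1 (e - j)
    rw [← vi_zl (Q (e - j)), ← vi_zl (Q (e - i)), h]
  · refine (zl_anti (h2 _)).trans (zl_vi hV.1).subset

lemma chain_le {V : Set (Fin n → ℂ)} (hV : IsIrredVariety n V) {d : ℕ} (h : HasChain n V d) :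
    d ≤ ee (vanishingIdeal n V) := by
  obtain ⟨W, h1, h2, h3⟩ := h
  have key : ∀ i : ℕ, ∀ hi : i < d + 1, i ≤ ee (vanishingIdeal n (W ⟨i, hi⟩)) := by
    intro i
    induction i with
    | zero => intro _; exact Nat.zero_le _
    | succ i ih =>
      intro hi
      have := ih (by omega)
      haveI := vi_prime (h1 ⟨i, by omega⟩)
      haveI := vi_prime (h1 ⟨i+1, hi⟩)
      have hss := h2 ⟨i, by omega⟩ ⟨i+1, hi⟩ (by simp)
      have : vanishingIdeal n (W ⟨i+1, hi⟩) < vanishingIdeal n (W ⟨i, by omega⟩) := by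
        refine lt_of_le_of_ne (vi_anti hss.subset) fun h => hss.ne ?_
        rw [← zl_vi (h1 ⟨i, by omega⟩).1, ← zl_vi (h1 ⟨i+1, hi⟩).1, h]
      have := ee_lt this
      omega
  have h4 := key d (by omega)
  haveI : (vanishingIdeal n (W ⟨d, by omega⟩)).IsPrime := vi_prime (h1 (Fin.last d))
  haveI := vi_prime hV
  exact h4.trans (ee_le (vi_anti h3))

lemma dim_eq {V : Set (Fin n → ℂ)} (hV : IsIrredVariety n V) :
    dim n V = ee (vanishingIdeal n V) := by
  apply le_antisymm
  · exact csSup_le ⟨_, hasChain_ee hV⟩ (fun d hd => chain_le hV hd)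
  · exact le_csSup ⟨_, fun d hd => chain_le hV hd⟩ (hasChain_ee hV)
end P7
end Part7

section Part8

section P8a
variable {B A F K : Type} [CommRing B] [IsDomain B] [IsIntegrallyClosed B] [CharZero B]
  [CommRing A] [IsDomain A] [Algebra B A] [Module.Finite B A] [FaithfulSMul B A]
  [Field F] [Field K] [Algebra B F] [IsFractionRing B F] [Algebra A K] [IsFractionRing A K]
  [Algebra F K] [Algebra B K] [IsScalarTower B F K] [IsScalarTower B A K] [Module.Finite F K]
  [CharZero F]

open Polynomial in
lemma prim_aux (B A F K : Type) [CommRing B] [IsDomain B] [IsIntegrallyClosed B] [CharZero B]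
  [CommRing A] [IsDomain A] [Algebra B A] [Module.Finite B A] [FaithfulSMul B A]
  [Field F] [Field K] [Algebra B F] [IsFractionRing B F] [Algebra A K] [IsFractionRing A K]
  [Algebra F K] [Algebra B K] [IsScalarTower B F K] [IsScalarTower B A K] [Module.Finite F K]
  [CharZero F] {D : ℕ} (g : Fin D → A) (hg : LinearIndependent B g) :
    ∃ z : A, D ≤ (minpoly B z).natDegree ∧
    ∃ d : B, d ≠ 0 ∧ ∃ a b : B[X],
      a * minpoly B z + b * derivative (minpoly B z) = Polynomial.C d := by
  obtain ⟨α, hα⟩ := Field.exists_primitive_element F K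
  obtain ⟨a, b, hb, hab⟩ := IsFractionRing.div_surjective (A := A) α
  obtain ⟨r, hr, c, hc⟩ :=
    (Algebra.IsIntegral.isIntegral (R := B) b).isAlgebraic.exists_nonzero_dvd hb
  have hb0 : algebraMap A K b ≠ 0 := by
    have := nonZeroDivisors.ne_zero hb
    rwa [Ne, FaithfulSMul.algebraMap_eq_zero_iff]
  have hr0 : algebraMap B F r ≠ 0 := by
    rwa [Ne, FaithfulSMul.algebraMap_eq_zero_iff]
  let z := a * c
  have hz : algebraMap A K z = algebraMap F K (algebraMap B F r) * α := by
    rw [← hab, ← IsScalarTower.algebraMap_apply B F K, IsScalarTower.algebraMap_apply B A K, hc]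
    simp only [z, map_mul]
    field_simp
  have hz1 : IntermediateField.adjoin F {algebraMap A K z} = ⊤ := by
    rw [eq_top_iff, ← hα, IntermediateField.adjoin_simple_le_iff]
    have h1 : algebraMap A K z ∈ IntermediateField.adjoin F {algebraMap A K z} :=
      IntermediateField.mem_adjoin_simple_self F _
    have : α = algebraMap F K (algebraMap B F r)⁻¹ * algebraMap A K z := by
      rw [hz, ← mul_assoc, ← map_mul, inv_mul_cancel₀ hr0, map_one, one_mul]
    rw [this]
    exact mul_mem (IntermediateField.algebraMap_mem _ _) h1
  have hzi : IsIntegral B z := Algebra.IsIntegral.isIntegral z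
  have hmin := minpoly.isIntegrallyClosed_eq_field_fractions F K hzi
  have hzi2 : IsIntegral F (algebraMap A K z) := Algebra.IsIntegral.isIntegral _
  have hdeg : (minpoly B z).natDegree = Module.finrank F K := by
    rw [← (minpoly.monic hzi).natDegree_map (algebraMap B F), ← hmin,
      ← IntermediateField.adjoin.finrank hzi2, hz1, IntermediateField.finrank_top']
  refine ⟨z, ?_, ?_⟩
  · rw [hdeg]
    have h1 : LinearIndependent B (fun i => algebraMap A K (g i)) :=
      hg.map' (IsScalarTower.toAlgHom B A K).toLinearMap
        (LinearMap.ker_eq_bot.2 (FaithfulSMul.algebraMap_injective A K))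
    have h2 := (LinearIndependent.iff_fractionRing B F).1 h1
    simpa using h2.fintype_card_le_finrank
  · have hsep : (minpoly F (algebraMap A K z)).Separable := Algebra.IsSeparable.isSeparable F _
    rw [hmin] at hsep
    obtain ⟨u, v, huv⟩ := hsep
    obtain ⟨b1, h1⟩ := IsLocalization.integerNormalization_map_to_map (nonZeroDivisors B) u
    obtain ⟨b2, h2⟩ := IsLocalization.integerNormalization_map_to_map (nonZeroDivisors B) v
    set U := IsLocalization.integerNormalization (nonZeroDivisors B) u
    set W := IsLocalization.integerNormalization (nonZeroDivisors B) v
    refine ⟨b1 * b2, mul_ne_zero (nonZeroDivisors.ne_zero b1.2) (nonZeroDivisors.ne_zero b2.2),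
      Polynomial.C (b2 : B) * U, Polynomial.C (b1 : B) * W, ?_⟩
    apply Polynomial.map_injective _ (IsFractionRing.injective B F)
    simp only [Polynomial.map_add, Polynomial.map_mul, Polynomial.map_C, h1, h2, map_mul]
    rw [Polynomial.derivative_map] at huv
    rw [Algebra.smul_def, Algebra.smul_def]
    simp only [IsScalarTower.algebraMap_apply B F F[X], Polynomial.algebraMap_eq]
    linear_combination (Polynomial.C (algebraMap B F ↑b1) * Polynomial.C (algebraMap B F ↑b2)) * huv

open Polynomial in
lemma prim (B A : Type) [CommRing B] [IsDomain B] [IsIntegrallyClosed B] [CharZero B]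
  [CommRing A] [IsDomain A] [Algebra B A] [Module.Finite B A] [FaithfulSMul B A]
   {D : ℕ} (g : Fin D → A) (hg : LinearIndependent B g) :
    ∃ z : A, D ≤ (minpoly B z).natDegree ∧
    ∃ d : B, d ≠ 0 ∧ ∃ a b : B[X],
      a * minpoly B z + b * derivative (minpoly B z) = Polynomial.C d := by
  letI : Algebra (FractionRing B) (FractionRing A) := FractionRing.liftAlgebra B (FractionRing A)
  exact prim_aux B A (FractionRing B) (FractionRing A) g hg

lemma fibre_pts {e : ℕ} (A : Type) [CommRing A] [IsDomain A] [Algebra ℂ A]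
    [Algebra (MvPolynomial (Fin e) ℂ) A] [IsScalarTower ℂ (MvPolynomial (Fin e) ℂ) A]
    [Module.Finite (MvPolynomial (Fin e) ℂ) A] [FaithfulSMul (MvPolynomial (Fin e) ℂ) A]
    {D : ℕ} (g : Fin D → A) (hg : LinearIndependent (MvPolynomial (Fin e) ℂ) g) :
    ∃ (z : A) (c : Fin e → ℂ) (S : Finset ℂ), D ≤ S.card ∧ ∀ ρ ∈ S, ∃ Q : Ideal A, Q.IsMaximal ∧
      z - algebraMap ℂ A ρ ∈ Q ∧
      ∀ i, algebraMap (MvPolynomial (Fin e) ℂ) A (X i) - algebraMap ℂ A (c i) ∈ Q := by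
  obtain ⟨z, hz, d, hd, a, b, hab⟩ := prim (MvPolynomial (Fin e) ℂ) A g hg
  obtain ⟨c, hc⟩ : ∃ c, eval c d ≠ 0 := by
    by_contra! h
    exact hd (MvPolynomial.funext (by simpa using h))
  have hzi : IsIntegral (MvPolynomial (Fin e) ℂ) z := Algebra.IsIntegral.isIntegral z
  set p := minpoly (MvPolynomial (Fin e) ℂ) z with hp
  have hmon : p.Monic := minpoly.monic hzi
  set q := p.map (eval c) with hq
  have hsep : q.Separable := by
    refine ⟨Polynomial.C (eval c d)⁻¹ * a.map (eval c), Polynomial.C (eval c d)⁻¹ * b.map (eval c), ?_⟩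
    have h1 := congrArg (Polynomial.map (eval c)) hab
    simp only [Polynomial.map_add, Polynomial.map_mul, Polynomial.map_C] at h1
    rw [hq, Polynomial.derivative_map, mul_assoc, mul_assoc, ← mul_add, h1, ← Polynomial.C_mul,
      inv_mul_cancel₀ hc, Polynomial.C_1]
  refine ⟨z, c, q.roots.toFinset, ?_, ?_⟩
  · rw [Multiset.toFinset_card_of_nodup (Polynomial.nodup_roots hsep),
      IsAlgClosed.card_roots_eq_natDegree, hq, hmon.natDegree_map]
    exact hz
  · intro ρ hρ
    rw [Multiset.mem_toFinset, Polynomial.mem_roots'] at hρ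
    let φ : Polynomial (MvPolynomial (Fin e) ℂ) →+* ℂ :=
      Polynomial.eval₂RingHom (eval c) ρ
    have hφs : Function.Surjective φ := fun t => ⟨Polynomial.C (MvPolynomial.C t), by simp [φ]⟩
    haveI : (RingHom.ker φ).IsMaximal := RingHom.ker_isMaximal_of_surjective φ hφs
    letI : Algebra (Polynomial (MvPolynomial (Fin e) ℂ)) A :=
      (Polynomial.aeval z : _ →ₐ[MvPolynomial (Fin e) ℂ] A).toRingHom.toAlgebra
    have hal : ∀ t, algebraMap (Polynomial (MvPolynomial (Fin e) ℂ)) A t = Polynomial.aeval z t :=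
      fun t => rfl
    haveI : IsScalarTower (MvPolynomial (Fin e) ℂ) (Polynomial (MvPolynomial (Fin e) ℂ)) A := by
      apply IsScalarTower.of_algebraMap_eq
      intro r; rw [hal]; simp
    haveI : Algebra.IsIntegral (Polynomial (MvPolynomial (Fin e) ℂ)) A :=
      Algebra.IsIntegral.tower_top (MvPolynomial (Fin e) ℂ)
    obtain ⟨Q, hQ, hQc⟩ := Ideal.exists_ideal_over_maximal_of_isIntegral (S := A)
      (RingHom.ker φ) (by
        intro t ht
        rw [RingHom.mem_ker, hal] at ht
        obtain ⟨s, hs⟩ := minpoly.isIntegrallyClosed_dvd hzi ht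
        rw [RingHom.mem_ker, hs, map_mul]
        have : φ p = 0 := by
          have := hρ.2
          rw [Polynomial.IsRoot.def, hq, Polynomial.eval_map] at this
          exact this
        rw [← hp, this, zero_mul])
    refine ⟨Q, hQ, ?_, ?_⟩
    · have : (Polynomial.X - Polynomial.C (MvPolynomial.C ρ) :
        Polynomial (MvPolynomial (Fin e) ℂ)) ∈ Q.comap (algebraMap _ A) := by
        rw [hQc, RingHom.mem_ker]; simp [φ]
      rw [Ideal.mem_comap, hal] at this
      simpa [IsScalarTower.algebraMap_apply ℂ (MvPolynomial (Fin e) ℂ) A,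
        MvPolynomial.algebraMap_eq] using this
    · intro i
      have : (Polynomial.C (X i - MvPolynomial.C (c i)) :
        Polynomial (MvPolynomial (Fin e) ℂ)) ∈ Q.comap (algebraMap _ A) := by
        rw [hQc, RingHom.mem_ker]; simp [φ]
      rw [Ideal.mem_comap, hal] at this
      simpa [IsScalarTower.algebraMap_apply ℂ (MvPolynomial (Fin e) ℂ) A,
        MvPolynomial.algebraMap_eq] using this
end P8a
end Part8

section Part9

section P9
variable {n : ℕ}

/-- evaluation at a point of the variety -/
def evq (P : Ideal (MvPolynomial (Fin n) ℂ)) (v : Fin n → ℂ)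
    (hv : v ∈ zeroLocus n (P : Set (MvPolynomial (Fin n) ℂ))) :
    (MvPolynomial (Fin n) ℂ ⧸ P) →ₐ[ℂ] ℂ :=
  Ideal.Quotient.liftₐ P (aeval v) (fun f hf => by rw [aeval_eq_eval]; exact hv f hf)

lemma evq_mk (P : Ideal (MvPolynomial (Fin n) ℂ)) (v : Fin n → ℂ)
    (hv : v ∈ zeroLocus n (P : Set (MvPolynomial (Fin n) ℂ))) (f : MvPolynomial (Fin n) ℂ) :
    evq P v hv (Ideal.Quotient.mk P f) = eval v f := by
  show aeval v f = _
  rw [aeval_eq_eval]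

lemma exists_point (P : Ideal (MvPolynomial (Fin n) ℂ)) (Q : Ideal (MvPolynomial (Fin n) ℂ ⧸ P))
    (hQ : Q.IsMaximal) : ∃ v, ∃ hv : v ∈ zeroLocus n (P : Set (MvPolynomial (Fin n) ℂ)),
      ∀ a ∈ Q, evq P v hv a = 0 := by
  have hm : (Q.comap (Ideal.Quotient.mk P)).IsMaximal :=
    Ideal.comap_isMaximal_of_surjective _ Ideal.Quotient.mk_surjective
  obtain ⟨v, hv⟩ := MvPolynomial.isMaximal_iff_eq_vanishingIdeal_singleton.1 hm
  have key : ∀ f, Ideal.Quotient.mk P f ∈ Q → eval v f = 0 := by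
    intro f hf
    rw [← Ideal.mem_comap, hv, MvPolynomial.mem_vanishingIdeal_singleton_iff] at hf
    simpa [aeval_eq_eval] using hf
  have hvP : v ∈ zeroLocus n (P : Set (MvPolynomial (Fin n) ℂ)) := by
    intro f hf
    apply key
    rw [Ideal.Quotient.eq_zero_iff_mem.2 hf]
    exact zero_mem _
  refine ⟨v, hvP, fun a ha => ?_⟩
  obtain ⟨f, rfl⟩ := Ideal.Quotient.mk_surjective a
  rw [evq_mk]
  exact key f ha

lemma exists_L (P : Ideal (MvPolynomial (Fin n) ℂ)) [P.IsPrime] :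
    ∃ D : ℕ, (∀ m, HP P m ≤ D * bb (ee P) m) ∧ ∃ L : AffineSubspace ℂ (Fin n → ℂ),
      Module.finrank ℂ L.direction = n - ee P ∧
      (zeroLocus n (P : Set (MvPolynomial (Fin n) ℂ)) ∩ ↑L).Finite ∧
      D ≤ (zeroLocus n (P : Set (MvPolynomial (Fin n) ℂ)) ∩ ↑L).ncard := by
  obtain ⟨y, hys, hy, G, H⟩ := pkg P
  letI := algOf y
  haveI := algOf_tower y
  haveI := algOf_faithful y hy
  haveI := H.finiteB
  obtain ⟨D, g, hgi, hgm, h, hh, hg⟩ := exists_basis (e := ee P) (H.fg.pow G)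
  refine ⟨D, fun m => Ustar H hgi hh (fun w _ => span_top H hg w), ?_⟩
  obtain ⟨z, c, S, hS, hSQ⟩ := fibre_pts (e := ee P) (MvPolynomial (Fin n) ℂ ⧸ P) g hgi
  -- linear forms
  have hys' : ∀ i, ∃ a : Fin n → ℂ, ∑ j, a j • cx P j = y i := fun i =>
    (Submodule.mem_span_range_iff_exists_fun ℂ).1 (hys i)
  choose a ha using hys'
  let M : Matrix (Fin (ee P)) (Fin n) ℂ := Matrix.of a
  have hMi : LinearIndependent ℂ M.row := by
    rw [Fintype.linearIndependent_iff]
    intro u hu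
    have hyl := hy.linearIndependent
    rw [Fintype.linearIndependent_iff] at hyl
    apply hyl
    have : ∀ j, ∑ i, u i * a i j = 0 := by
      intro j
      have := congrFun hu j
      simpa [M, Matrix.row] using this
    calc ∑ i, u i • y i = ∑ i, ∑ j, (u i * a i j) • cx P j := by
          refine Finset.sum_congr rfl fun i _ => ?_
          rw [← ha i, Finset.smul_sum]
          simp only [smul_smul]
      _ = ∑ j, (∑ i, u i * a i j) • cx P j := by
          rw [Finset.sum_comm]
          simp only [Finset.sum_smul]
      _ = 0 := by simp [this]
  have hrank : Module.finrank ℂ (LinearMap.range M.mulVecLin) = ee P := by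
    have := hMi.rank_matrix
    simpa [Matrix.rank] using this
  have hker : Module.finrank ℂ (LinearMap.ker M.mulVecLin) = n - ee P := by
    have := LinearMap.finrank_range_add_finrank_ker M.mulVecLin
    rw [hrank] at this
    simp at this
    omega
  have hsurj : LinearMap.range M.mulVecLin = ⊤ := by
    apply Submodule.eq_top_of_finrank_eq
    rw [hrank]; simp
  obtain ⟨v0, hv0⟩ := LinearMap.range_eq_top.1 hsurj c
  have hevy : ∀ v (hv : v ∈ zeroLocus n (P : Set (MvPolynomial (Fin n) ℂ))) i,
      evq P v hv (y i) = M.mulVecLin v i := by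
    intro v hv i
    rw [← ha i, map_sum]
    simp only [map_smul, cx, evq_mk, eval_X]
    simp [Matrix.mulVec, dotProduct, M]
  let L : AffineSubspace ℂ (Fin n → ℂ) := AffineSubspace.mk' v0 (LinearMap.ker M.mulVecLin)
  have hL : ∀ v, v ∈ L ↔ M.mulVecLin v = c := by
    intro v
    rw [AffineSubspace.mem_mk', vsub_eq_sub, LinearMap.mem_ker, map_sub, hv0, sub_eq_zero]
  have hfin : (zeroLocus n (P : Set (MvPolynomial (Fin n) ℂ)) ∩ ↑L).Finite := by
    have hint : ∀ j, IsIntegral (MvPolynomial (Fin (ee P)) ℂ) (cx P j) := fun j =>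
      Algebra.IsIntegral.isIntegral _
    choose q hqm hq0 using hint
    refine (Set.Finite.pi' (fun j : Fin n => ((q j).map (eval c)).roots.toFinset.finite_toSet)).subset ?_
    rintro v ⟨hv, hvL⟩ j
    rw [SetLike.mem_coe, hL] at hvL
    rw [Finset.mem_coe, Multiset.mem_toFinset, Polynomial.mem_roots ((hqm j).map _).ne_zero,
      Polynomial.IsRoot.def, Polynomial.eval_map]
    have h1 := congrArg (evq P v hv) (hq0 j)
    rw [map_zero] at h1
    have h2 : ((evq P v hv : _ →+* ℂ)).comp (algebraMap (MvPolynomial (Fin (ee P)) ℂ)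
        (MvPolynomial (Fin n) ℂ ⧸ P)) = eval c := by
      apply MvPolynomial.ringHom_ext
      · intro r
        rw [RingHom.comp_apply, algOf_map]
        simp
      · intro i
        rw [RingHom.comp_apply, algOf_map]
        simp [hevy, hvL]
    have h3 := Polynomial.hom_eval₂ (q j) (algebraMap (MvPolynomial (Fin (ee P)) ℂ)
        (MvPolynomial (Fin n) ℂ ⧸ P)) (evq P v hv : _ →+* ℂ) (cx P j)
    rw [h2] at h3
    have h4 : (evq P v hv : _ →+* ℂ) (cx P j) = v j := by
      show evq P v hv (Ideal.Quotient.mk P (X j)) = _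
      rw [evq_mk, eval_X]
    rw [h4] at h3
    rw [← h3]; exact h1
  refine ⟨L, ?_, hfin, ?_⟩
  · rw [AffineSubspace.direction_mk', hker]
  · have hpt : ∀ ρ : S, ∃ v, ∃ hv : v ∈ zeroLocus n (P : Set (MvPolynomial (Fin n) ℂ)),
        v ∈ L ∧ evq P v hv z = ρ := by
      rintro ⟨ρ, hρ⟩
      obtain ⟨Q, hQ, h1, h2⟩ := hSQ ρ hρ
      obtain ⟨v, hv, hvQ⟩ := exists_point P Q hQ
      refine ⟨v, hv, ?_, ?_⟩
      · rw [hL]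
        funext i
        rw [← hevy v hv]
        have := hvQ _ (h2 i)
        rw [map_sub, AlgHom.commutes, sub_eq_zero, algOf_map, aeval_X] at this
        exact this
      · have := hvQ _ h1
        rw [map_sub, AlgHom.commutes, sub_eq_zero] at this
        exact this
    choose w hwV hwL hwz using hpt
    have hinj : Function.Injective w := by
      intro ρ σ hρσ
      apply Subtype.ext
      rw [← hwz ρ, ← hwz σ]
      congr 1
      congr 1
    calc D ≤ S.card := hS
      _ = (Set.range w).ncard := by
          rw [← Set.image_univ, Set.ncard_image_of_injective _ hinj, Set.ncard_univ]; simp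
      _ ≤ _ := by
          refine Set.ncard_le_ncard ?_ hfin
          rintro _ ⟨ρ, rfl⟩
          exact ⟨hwV ρ, hwL ρ⟩
end P9
end Part9

section Part10

section P10
variable {S T : Type} [CommRing S] [CommRing T] [Algebra ℂ S] [Algebra ℂ T] [Algebra S T]
  [IsScalarTower ℂ S T] [Algebra.FiniteType ℂ S] [Algebra.FiniteType ℂ T]

lemma bd_one (hfin : Algebra.FiniteType ℂ T) (r : T) (hr : IsIntegral S r)
    (hx : ∀ x : T, ∃ m : ℕ, IsIntegral S (r ^ m * x)) :
    ∃ N : ℕ, ∀ σ : S →+* ℂ,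
      {φ : T →ₐ[ℂ] ℂ | (φ : T →+* ℂ).comp (algebraMap S T) = σ ∧ φ r ≠ 0}.Finite ∧
      {φ : T →ₐ[ℂ] ℂ | (φ : T →+* ℂ).comp (algebraMap S T) = σ ∧ φ r ≠ 0}.ncard ≤ N := by
  classical
  obtain ⟨s, hs⟩ := hfin.out
  choose m hm using hx
  let y : Option s → T := fun o => o.elim r (fun x => r ^ m x * x)
  have hy : ∀ o, IsIntegral S (y o) := by
    rintro (_ | x)
    · exact hr
    · exact hm x
  choose q hqm hq0 using hy
  refine ⟨∏ o, (q o).natDegree, fun σ => ?_⟩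
  set Φ := {φ : T →ₐ[ℂ] ℂ | (φ : T →+* ℂ).comp (algebraMap S T) = σ ∧ φ r ≠ 0} with hΦ
  let B : Finset (Option s → ℂ) := Fintype.piFinset (fun o => ((q o).map σ).roots.toFinset)
  let g : (T →ₐ[ℂ] ℂ) → (Option s → ℂ) := fun φ o => φ (y o)
  have hmap : ∀ φ ∈ Φ, g φ ∈ (B : Set (Option s → ℂ)) := by
    rintro φ ⟨h1, h2⟩
    rw [Finset.mem_coe, Fintype.mem_piFinset]
    intro o
    rw [Multiset.mem_toFinset, Polynomial.mem_roots ((hqm o).map _).ne_zero,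
      Polynomial.IsRoot.def, Polynomial.eval_map, ← h1]
    have := congrArg φ (hq0 o)
    rw [map_zero] at this
    rw [← this]
    exact (Polynomial.hom_eval₂ (q o) (algebraMap S T) (φ : T →+* ℂ) (y o)).symm
  have hinj : Set.InjOn g Φ := by
    rintro φ ⟨h1, h2⟩ ψ ⟨h3, h4⟩ h
    have hr' : φ r = ψ r := congrFun h none
    refine AlgHom.ext_of_adjoin_eq_top hs ?_
    intro x hxs
    have h5 : φ (r ^ m x * x) = ψ (r ^ m x * x) := congrFun h (some ⟨x, hxs⟩)
    rw [map_mul, map_mul, map_pow, map_pow, hr'] at h5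
    exact mul_left_cancel₀ (pow_ne_zero _ h4) h5
  have hfinΦ : Φ.Finite := Set.Finite.of_finite_image
    (B.finite_toSet.subset (by rintro _ ⟨φ, h, rfl⟩; exact hmap φ h)) hinj
  refine ⟨hfinΦ, ?_⟩
  calc Φ.ncard ≤ (B : Set (Option s → ℂ)).ncard :=
        Set.ncard_le_ncard_of_injOn g hmap hinj B.finite_toSet
    _ = B.card := Set.ncard_coe_finset B
    _ = ∏ o, ((q o).map σ).roots.toFinset.card := Fintype.card_piFinset _
    _ ≤ _ := Finset.prod_le_prod' fun o _ =>
        (Multiset.toFinset_card_le _).trans ((Polynomial.card_roots' _).trans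
          Polynomial.natDegree_map_le)

lemma null (m : Ideal T) (hm : m.IsMaximal) : ∃ ψ : T →ₐ[ℂ] ℂ, ∀ t ∈ m, ψ t = 0 := by
  have := hm
  letI : Field (T ⧸ m) := Ideal.Quotient.field m
  haveI : Algebra.FiniteType ℂ (T ⧸ m) := inferInstance
  have h : Module.Finite ℂ (T ⧸ m) := finite_of_finite_type_of_isJacobsonRing ℂ (T ⧸ m)
  haveI : Algebra.IsIntegral ℂ (T ⧸ m) := inferInstance
  have hb : Function.Bijective (algebraMap ℂ (T ⧸ m)) :=
    IsAlgClosed.algebraMap_bijective_of_isIntegral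
  let e := (AlgEquiv.ofBijective (Algebra.ofId ℂ (T ⧸ m)) hb).symm
  refine ⟨e.toAlgHom.comp (Ideal.Quotient.mkₐ ℂ m), fun t ht => ?_⟩
  have : Ideal.Quotient.mkₐ ℂ m t = 0 := Ideal.Quotient.eq_zero_iff_mem.2 ht
  rw [AlgHom.comp_apply, this, map_zero]

lemma qf (σ : S →+* ℂ)
    (hfin : {φ : T →ₐ[ℂ] ℂ | (φ : T →+* ℂ).comp (algebraMap S T) = σ}.Finite)
    (φ : T →ₐ[ℂ] ℂ) (hφ : (φ : T →+* ℂ).comp (algebraMap S T) = σ) :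
    ∃ r : T, (IsIntegral S r ∧ ∀ x : T, ∃ m : ℕ, IsIntegral S (r ^ m * x)) ∧ φ r ≠ 0 := by
  classical
  haveI : Algebra.FiniteType S T := Algebra.FiniteType.of_restrictScalars_finiteType ℂ S T
  have hsep : ∀ ψ : T →ₐ[ℂ] ℂ, ∃ t : T, ψ ≠ φ → (ψ t = 0 ∧ φ t ≠ 0) := by
    intro ψ
    by_cases h : ψ = φ
    · exact ⟨0, fun h' => absurd h h'⟩
    · have : ∃ t, ψ t ≠ φ t := by
        by_contra hc
        push Not at hc
        exact h (AlgHom.ext hc)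
      obtain ⟨t, ht⟩ := this
      refine ⟨t - algebraMap ℂ T (ψ t), fun _ => ⟨by simp, ?_⟩⟩
      rw [map_sub, AlgHom.commutes]
      exact sub_ne_zero.2 (Ne.symm ht)
  choose t ht using hsep
  let s : T := ∏ ψ ∈ hfin.toFinset.erase φ, t ψ
  have hs1 : φ s ≠ 0 := by
    rw [map_prod]
    exact Finset.prod_ne_zero_iff.2 fun ψ hψ => (ht ψ (Finset.ne_of_mem_erase hψ)).2
  have hs2 : ∀ ψ : T →ₐ[ℂ] ℂ, (ψ : T →+* ℂ).comp (algebraMap S T) = σ → ψ ≠ φ → ψ s = 0 := by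
    intro ψ h1 h2
    rw [map_prod]
    exact Finset.prod_eq_zero (Finset.mem_erase.2 ⟨h2, hfin.mem_toFinset.2 h1⟩) (ht ψ h2).1
  let q : PrimeSpectrum T := ⟨RingHom.ker (φ : T →+* ℂ), RingHom.ker_isPrime _⟩
  have hqmax : (RingHom.ker (φ : T →+* ℂ)).IsMaximal :=
    RingHom.ker_isMaximal_of_surjective _ (fun c => ⟨algebraMap ℂ T c, by simp⟩)
  have hJ : IsJacobsonRing T := isJacobsonRing_of_finiteType (A := ℂ)
  have key : ∀ q' : PrimeSpectrum T, q'.comap (algebraMap S T) = q.comap (algebraMap S T) →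
      s ∉ q'.asIdeal → q' = q := by
    intro q' h1 h2
    have hle : RingHom.ker (φ : T →+* ℂ) ≤ q'.asIdeal := by
      intro a ha
      have hm : a * s ∈ q'.asIdeal := by
        have hrad := hJ.out q'.2.isRadical
        rw [← hrad, Ideal.jacobson, Ideal.mem_sInf]
        rintro m ⟨hm1, hm2⟩
        obtain ⟨ψ, hψ⟩ := null m hm2
        have hker : m = RingHom.ker (ψ : T →+* ℂ) :=
          hm2.eq_of_le (RingHom.ker_ne_top _) (fun t ht => hψ t ht)
        have hσ : (ψ : T →+* ℂ).comp (algebraMap S T) = σ := by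
          ext z
          have hz : algebraMap S T (z - algebraMap ℂ S (σ z)) ∈ q'.asIdeal := by
            have : z - algebraMap ℂ S (σ z) ∈ (q.comap (algebraMap S T)).asIdeal := by
              show φ (algebraMap S T (z - algebraMap ℂ S (σ z))) = 0
              rw [map_sub, map_sub, ← IsScalarTower.algebraMap_apply, AlgHom.commutes, ← hφ]
              simp
            rw [← h1] at this
            exact this
          have := hψ _ (hm1 hz)
          rw [map_sub, map_sub, ← IsScalarTower.algebraMap_apply, AlgHom.commutes, sub_eq_zero] at this
          exact this
        by_cases h : ψ = φ
        · subst h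
          rw [hker]
          exact Ideal.mul_mem_right _ _ ha
        · rw [hker]
          exact Ideal.mul_mem_left _ _ (hs2 ψ hσ h)
      exact (q'.2.mem_or_mem hm).resolve_right h2
    exact PrimeSpectrum.ext (hqmax.eq_of_le q'.2.ne_top hle).symm
  have hQ : Algebra.QuasiFiniteAt S q.asIdeal := by
    apply Algebra.QuasiFiniteAt.of_isOpen_singleton_fiber
    refine ⟨PrimeSpectrum.basicOpen s, (PrimeSpectrum.basicOpen s).isOpen, ?_⟩
    ext ⟨q', hq'⟩
    constructor
    · intro h
      have := key q' hq' h
      subst this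
      rfl
    · intro h
      have : q' = q := congrArg Subtype.val h
      subst this
      exact hs1
  have hZ := Algebra.ZariskisMainProperty.of_finiteType (R := S) q.asIdeal
  obtain ⟨r, hr, h1, h2⟩ := Algebra.zariskisMainProperty_iff.1 hZ
  exact ⟨r, ⟨h1, h2⟩, hr⟩

theorem fibre_bound (S T : Type) [CommRing S] [CommRing T] [Algebra ℂ S] [Algebra ℂ T]
    [Algebra S T] [IsScalarTower ℂ S T] [Algebra.FiniteType ℂ S] [Algebra.FiniteType ℂ T] :
    ∃ N : ℕ, ∀ σ : S →+* ℂ,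
      {φ : T →ₐ[ℂ] ℂ | (φ : T →+* ℂ).comp (algebraMap S T) = σ}.Finite →
      {φ : T →ₐ[ℂ] ℂ | (φ : T →+* ℂ).comp (algebraMap S T) = σ}.ncard ≤ N := by
  classical
  let G : Set T := {r | IsIntegral S r ∧ ∀ x : T, ∃ m : ℕ, IsIntegral S (r ^ m * x)}
  haveI : IsNoetherianRing T := Algebra.FiniteType.isNoetherianRing ℂ T
  obtain ⟨F, hF, hspan⟩ := Submodule.fg_span_iff_fg_span_finset_subset G |>.1
    (IsNoetherian.noetherian (Submodule.span T G))
  have hb : ∀ r : F, ∃ N : ℕ, ∀ σ : S →+* ℂ,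
      {φ : T →ₐ[ℂ] ℂ | (φ : T →+* ℂ).comp (algebraMap S T) = σ ∧ φ r ≠ 0}.Finite ∧
      {φ : T →ₐ[ℂ] ℂ | (φ : T →+* ℂ).comp (algebraMap S T) = σ ∧ φ r ≠ 0}.ncard ≤ N :=
    fun r => bd_one (S := S) (T := T) inferInstance (r : T) (hF r.2).1 (hF r.2).2
  choose N hN using hb
  refine ⟨∑ r, N r, fun σ hfin => ?_⟩
  have hcov : {φ : T →ₐ[ℂ] ℂ | (φ : T →+* ℂ).comp (algebraMap S T) = σ} ⊆
      ⋃ r ∈ (Finset.univ : Finset F),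
        {φ : T →ₐ[ℂ] ℂ | (φ : T →+* ℂ).comp (algebraMap S T) = σ ∧ φ r ≠ 0} := by
    intro φ hφ
    obtain ⟨r, hr, hr0⟩ := qf σ hfin φ hφ
    have : ∃ r' ∈ F, φ r' ≠ 0 := by
      by_contra hc
      push Not at hc
      have h1 : Submodule.span T (F : Set T) ≤ RingHom.ker (φ : T →+* ℂ) :=
        Submodule.span_le.2 fun z hz => hc z hz
      exact hr0 (h1 (hspan ▸ Submodule.subset_span hr))
    obtain ⟨r', h1, h2⟩ := this
    simp only [Set.mem_iUnion]
    exact ⟨⟨r', h1⟩, Finset.mem_univ _, hφ, h2⟩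
  calc _ ≤ (⋃ r ∈ (Finset.univ : Finset F),
        {φ : T →ₐ[ℂ] ℂ | (φ : T →+* ℂ).comp (algebraMap S T) = σ ∧ φ r ≠ 0}).ncard :=
        Set.ncard_le_ncard hcov (Set.Finite.biUnion (Finset.finite_toSet _) fun r _ => (hN r σ).1)
    _ ≤ ∑ r : F, {φ : T →ₐ[ℂ] ℂ | (φ : T →+* ℂ).comp (algebraMap S T) = σ ∧ φ r ≠ 0}.ncard :=
        Finset.set_ncard_biUnion_le _ _
    _ ≤ _ := Finset.sum_le_sum fun r _ => (hN r σ).2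

lemma exists_eqs {n : ℕ} (L : AffineSubspace ℂ (Fin n → ℂ)) (p : Fin n → ℂ) (hp : p ∈ L) :
    ∃ (A : Fin n → Fin n → ℂ) (b : Fin n → ℂ), ∀ x, x ∈ L ↔ ∀ i, ∑ j, A i j * x j = b i := by
  obtain ⟨W, hW⟩ := Submodule.exists_isCompl L.direction
  let e := W.subtype.comp (Submodule.linearProjOfIsCompl W L.direction hW.symm)
  have he : ∀ v, e v = 0 ↔ v ∈ L.direction := by
    intro v
    show ((Submodule.linearProjOfIsCompl W L.direction hW.symm v : W) : Fin n → ℂ) = 0 ↔ _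
    rw [ZeroMemClass.coe_eq_zero]
    exact Submodule.linearProjOfIsCompl_apply_eq_zero_iff hW.symm
  let M := LinearMap.toMatrix' e
  refine ⟨fun i j => M i j, e p, fun x => ?_⟩
  have h1 : ∀ i, ∑ j, M i j * x j = e x i := by
    intro i
    have := LinearMap.toMatrix'_mulVec e x
    exact congrFun this i
  simp only [h1]
  rw [← _root_.funext_iff, ← sub_eq_zero, ← map_sub, he]
  exact ⟨fun hx => AffineSubspace.vsub_mem_direction hx hp,
    fun h => by
      have := AffineSubspace.vadd_mem_of_mem_direction h hp
      simpa using this⟩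

theorem deg_bdd {n : ℕ} (P : Ideal (MvPolynomial (Fin n) ℂ)) [P.IsPrime] :
    ∃ N : ℕ, ∀ L : AffineSubspace ℂ (Fin n → ℂ),
      (zeroLocus n (P : Set (MvPolynomial (Fin n) ℂ)) ∩ ↑L).Finite →
      (zeroLocus n (P : Set (MvPolynomial (Fin n) ℂ)) ∩ ↑L).ncard ≤ N := by
  classical
  let y : Fin n ⊕ (Fin n × Fin n) →
      MvPolynomial (Fin n × Fin n) (MvPolynomial (Fin n) ℂ ⧸ P) :=
    Sum.elim (fun i => ∑ j, X (i, j) * C (cx P j)) X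
  let F : MvPolynomial (Fin n ⊕ (Fin n × Fin n)) ℂ →ₐ[ℂ]
    MvPolynomial (Fin n × Fin n) (MvPolynomial (Fin n) ℂ ⧸ P) := aeval y
  letI : Algebra (MvPolynomial (Fin n ⊕ (Fin n × Fin n)) ℂ)
    (MvPolynomial (Fin n × Fin n) (MvPolynomial (Fin n) ℂ ⧸ P)) := F.toRingHom.toAlgebra
  haveI : IsScalarTower ℂ (MvPolynomial (Fin n ⊕ (Fin n × Fin n)) ℂ)
    (MvPolynomial (Fin n × Fin n) (MvPolynomial (Fin n) ℂ ⧸ P)) :=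
    IsScalarTower.of_algebraMap_eq fun c => (F.commutes c).symm
  haveI : Algebra.FiniteType ℂ (MvPolynomial (Fin n × Fin n) (MvPolynomial (Fin n) ℂ ⧸ P)) :=
    Algebra.FiniteType.trans (S := MvPolynomial (Fin n) ℂ ⧸ P) inferInstance inferInstance
  obtain ⟨N, hN⟩ := fibre_bound (MvPolynomial (Fin n ⊕ (Fin n × Fin n)) ℂ)
    (MvPolynomial (Fin n × Fin n) (MvPolynomial (Fin n) ℂ ⧸ P))
  refine ⟨N, fun L hL => ?_⟩
  by_cases hne : ∃ p, p ∈ L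
  swap
  · have : zeroLocus n (P : Set (MvPolynomial (Fin n) ℂ)) ∩ ↑L = ∅ := by
      ext x
      simp only [Set.mem_inter_iff, Set.mem_empty_iff_false, iff_false, not_and]
      intro _ h
      exact hne ⟨x, h⟩
    rw [this]; simp
  obtain ⟨p, hp⟩ := hne
  obtain ⟨A, b, hAb⟩ := exists_eqs L p hp
  have hF : ∀ z, algebraMap (MvPolynomial (Fin n ⊕ (Fin n × Fin n)) ℂ)
    (MvPolynomial (Fin n × Fin n) (MvPolynomial (Fin n) ℂ ⧸ P)) z = aeval y z := fun z => rfl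
  let σ : MvPolynomial (Fin n ⊕ (Fin n × Fin n)) ℂ →+* ℂ :=
    eval (Sum.elim b (fun ij => A ij.1 ij.2))
  have hσ := hN σ
  set Φ := {φ : MvPolynomial (Fin n × Fin n) (MvPolynomial (Fin n) ℂ ⧸ P) →ₐ[ℂ] ℂ |
    (φ : _ →+* ℂ).comp (algebraMap (MvPolynomial (Fin n ⊕ (Fin n × Fin n)) ℂ)
    (MvPolynomial (Fin n × Fin n) (MvPolynomial (Fin n) ℂ ⧸ P))) = σ} with hΦ
  have hmem : ∀ φ, φ ∈ Φ ↔ (∀ i j, φ (X (i, j)) = A i j) ∧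
      ∀ i, ∑ j, A i j * φ (C (cx P j)) = b i := by
    intro φ
    have e1 : φ ∈ Φ ↔ ∀ o, φ (y o) = Sum.elim b (fun ij => A ij.1 ij.2) o := by
      constructor
      · intro h o
        have := congrArg (fun g => g (X o)) (show _ = _ from h)
        simp only [RingHom.comp_apply, hF, aeval_X, σ, eval_X] at this
        exact this
      · intro h
        apply MvPolynomial.ringHom_ext
        · intro r
          rw [RingHom.comp_apply, hF, aeval_C]
          simp only [σ, eval_C]
          exact φ.commutes r
        · intro o
          rw [RingHom.comp_apply, hF, aeval_X]
          simp only [σ, eval_X]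
          exact h o
    rw [e1]
    constructor
    · intro h
      have h1 : ∀ i j, φ (X (i, j)) = A i j := fun i j => h (Sum.inr (i, j))
      refine ⟨h1, fun i => ?_⟩
      have := h (Sum.inl i)
      simp only [y, Sum.elim_inl, map_sum, map_mul, h1] at this
      exact this
    · rintro ⟨h1, h2⟩ (i | ⟨i, j⟩)
      · simp only [y, Sum.elim_inl, map_sum, map_mul, h1]
        exact h2 i
      · exact h1 i j
  let g : (MvPolynomial (Fin n × Fin n) (MvPolynomial (Fin n) ℂ ⧸ P) →ₐ[ℂ] ℂ) → (Fin n → ℂ) :=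
    fun φ j => φ (C (cx P j))
  have hCg : ∀ (φ : MvPolynomial (Fin n × Fin n) (MvPolynomial (Fin n) ℂ ⧸ P) →ₐ[ℂ] ℂ)
      (f : MvPolynomial (Fin n) ℂ), φ (C (Ideal.Quotient.mk P f)) = eval (g φ) f := by
    intro φ f
    have : ((φ : _ →+* ℂ).comp ((C : _ →+* MvPolynomial (Fin n × Fin n)
        (MvPolynomial (Fin n) ℂ ⧸ P)).comp (Ideal.Quotient.mk P))) = eval (g φ) := by
      apply MvPolynomial.ringHom_ext
      · intro r
        have := φ.commutes r
        rw [eval_C]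
        exact this
      · intro j
        rw [eval_X]
        rfl
    exact congrArg (fun h => h f) this
  have himg : g '' Φ = zeroLocus n (P : Set (MvPolynomial (Fin n) ℂ)) ∩ ↑L := by
    ext x
    constructor
    · rintro ⟨φ, hφ, rfl⟩
      refine ⟨fun f hf => ?_, (hAb _).2 ((hmem φ).1 hφ).2⟩
      rw [← hCg φ f, Ideal.Quotient.eq_zero_iff_mem.2 hf, map_zero, map_zero]
    · rintro ⟨hx, hxL⟩
      let φ : MvPolynomial (Fin n × Fin n) (MvPolynomial (Fin n) ℂ ⧸ P) →ₐ[ℂ] ℂ :=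
        { eval₂Hom (evq P x hx : _ →+* ℂ) (fun ij => A ij.1 ij.2) with
          commutes' := fun r => by
            have h : algebraMap ℂ (MvPolynomial (Fin n × Fin n) (MvPolynomial (Fin n) ℂ ⧸ P)) r =
              C (algebraMap ℂ _ r) := rfl
            rw [h]
            simp }
      have hgφ : ∀ j, φ (C (cx P j)) = x j := by
        intro j
        have : φ (C (cx P j)) = evq P x hx (cx P j) := eval₂_C _ _ _
        rw [this]
        show evq P x hx (Ideal.Quotient.mk P (X j)) = _
        rw [evq_mk, eval_X]
      refine ⟨φ, (hmem φ).2 ⟨fun i j => eval₂_X _ _ _, fun i => ?_⟩, funext hgφ⟩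
      simp only [hgφ]
      exact (hAb x).1 hxL i
  have hinj : Set.InjOn g Φ := by
    intro φ hφ ψ hψ h
    apply AlgHom.coe_ringHom_injective
    apply MvPolynomial.ringHom_ext
    · intro r
      obtain ⟨f, rfl⟩ := Ideal.Quotient.mk_surjective r
      show φ _ = ψ _
      rw [hCg, hCg, h]
    · rintro ⟨i, j⟩
      show φ _ = ψ _
      rw [((hmem φ).1 hφ).1, ((hmem ψ).1 hψ).1]
  rw [← himg] at hL ⊢
  have hfinΦ : Φ.Finite := Set.Finite.of_finite_image hL hinj
  exact (Set.ncard_image_le hfinΦ).trans (hσ hfinΦ)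
end P10
end Part10

section Part11

section P11
variable {n : ℕ}

lemma degree_ge {V : Set (Fin n → ℂ)} (hV : IsIrredVariety n V) :
    ∃ D, (∀ m, HP (vanishingIdeal n V) m ≤ D * bb (ee (vanishingIdeal n V)) m) ∧
      D ≤ degree n V := by
  haveI := vi_prime hV
  obtain ⟨D, hD, L, h1, h2, h3⟩ := exists_L (vanishingIdeal n V)
  refine ⟨D, hD, ?_⟩
  obtain ⟨N, hN⟩ := deg_bdd (vanishingIdeal n V)
  rw [zl_vi hV.1] at h2 h3 hN
  refine h3.trans ?_
  unfold degree
  refine le_csSup ⟨N, ?_⟩ ⟨L, ?_, h2, rfl⟩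
  · rintro m ⟨L', -, h5, rfl⟩
    exact hN L' h5
  · rw [dim_eq hV]; exact h1

/-- primes between the degree-at-most-`δ` part of `I` and `I` -/
def Ok (I : Ideal (MvPolynomial (Fin n) ℂ)) (δ : ℕ) (Q : Ideal (MvPolynomial (Fin n) ℂ)) : Prop :=
  Q.IsPrime ∧ Q ≤ I ∧ ∀ f ∈ I, f.totalDegree ≤ δ → f ∈ Q

/-- minimal codimension -/
def hh (I : Ideal (MvPolynomial (Fin n) ℂ)) (δ : ℕ) : ℕ :=
  sInf {k | ∃ Q, Ok I δ Q ∧ k = n - ee Q}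

/-- partial degrees -/
def dd (I : Ideal (MvPolynomial (Fin n) ℂ)) (i : ℕ) : ℕ := sInf {δ | i ≤ hh I δ}

variable (I : Ideal (MvPolynomial (Fin n) ℂ)) [hI : I.IsPrime]

lemma hh_exists (δ : ℕ) : ∃ Q, Ok I δ Q ∧ hh I δ = n - ee Q :=
  Nat.sInf_mem (s := {k | ∃ Q, Ok I δ Q ∧ k = n - ee Q})
    ⟨n - ee I, I, ⟨hI, le_rfl, fun f h _ => h⟩, rfl⟩

lemma hh_le {δ : ℕ} {Q : Ideal (MvPolynomial (Fin n) ℂ)} (h : Ok I δ Q) : hh I δ ≤ n - ee Q :=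
  Nat.sInf_le ⟨Q, h, rfl⟩

lemma hh_mono {δ δ' : ℕ} (h : δ ≤ δ') : hh I δ ≤ hh I δ' := by
  obtain ⟨Q, ⟨h1, h2, h3⟩, h4⟩ := hh_exists I δ'
  rw [h4]
  exact hh_le I ⟨h1, h2, fun f hf hd => h3 f hf (hd.trans h)⟩

lemma hh_zero : hh I 0 = 0 := by
  have : Ok I 0 ⊥ := by
    refine ⟨inferInstance, bot_le, fun f hf h => ?_⟩
    have h0 := MvPolynomial.totalDegree_eq_zero_iff_eq_C.1 (Nat.le_zero.1 h)
    by_contra hne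
    rw [h0] at hf
    have hc : coeff 0 f ≠ 0 := by
      intro hc
      rw [hc, map_zero] at h0
      exact hne (by rw [h0]; exact zero_mem _)
    exact hI.ne_top (Ideal.eq_top_of_isUnit_mem _ hf ((IsUnit.mk0 _ hc).map C))
  have := hh_le I this
  rw [ee_bot] at this
  omega

lemma hh_top : ∃ M, hh I M = n - ee I := by
  obtain ⟨s, hs⟩ := IsNoetherian.noetherian I
  refine ⟨s.sup totalDegree, ?_⟩
  obtain ⟨Q, ⟨h1, h2, h3⟩, h4⟩ := hh_exists I (s.sup totalDegree)
  have : I ≤ Q := by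
    rw [← hs]
    refine Submodule.span_le.2 fun f hf => h3 f ?_ (Finset.le_sup (f := totalDegree) hf)
    rw [← hs]; exact Submodule.subset_span hf
  rw [h4, le_antisymm h2 this]

lemma dd_spec {i : ℕ} (hi : i ≤ n - ee I) : i ≤ hh I (dd I i) := by
  obtain ⟨M, hM⟩ := hh_top I
  exact Nat.sInf_mem (s := {δ | i ≤ hh I δ}) ⟨M, show i ≤ hh I M from hM.symm ▸ hi⟩

lemma dd_le {i δ : ℕ} (h : i ≤ hh I δ) : dd I i ≤ δ := Nat.sInf_le h

lemma dd_mono {i j : ℕ} (hij : i ≤ j) (hj : j ≤ n - ee I) : dd I i ≤ dd I j :=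
  dd_le I (hij.trans (dd_spec I hj))

lemma hh_le_top (δ : ℕ) : hh I δ ≤ n - ee I :=
  hh_le I ⟨hI, le_rfl, fun f h _ => h⟩

lemma le_bb' (e T : ℕ) : (T+1)^e ≤ e.factorial * bb e T := by
  have := le_bb e T
  exact_mod_cast this

theorem main_ineq (M : ℕ) :
    (M+1)^(n - hh I M) * ∏ j ∈ Finset.Icc 1 (hh I M), dd I j ≤
      n.factorial * (2^n * n.factorial)^(hh I M) * HP I M := by
  induction M using Nat.strong_induction_on with
  | _ M ih =>
  obtain ⟨P, ⟨hP1, hP2, hP3⟩, hP4⟩ := hh_exists I M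
  haveI := hP1
  have hen := ee_le_n P
  have hHM : HP P M = HP I M := HP_eq hP2 hP3
  rcases Nat.eq_zero_or_pos (hh I M) with h0 | hpos
  · rw [h0]
    have heP : ee P = n := by omega
    have h1 := HP_ge P M
    rw [heP, hHM] at h1
    simp only [Nat.sub_zero, pow_zero, mul_one]
    rw [Finset.Icc_eq_empty (by omega), Finset.prod_empty, mul_one]
    exact (le_bb' n M).trans (Nat.mul_le_mul_left _ h1)
  set i := hh I M with hi
  set δ := dd I i with hδ
  have hiM : i ≤ n - ee I := hh_le_top I M
  have hδM : δ ≤ M := dd_le I le_rfl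
  have hδs : i ≤ hh I δ := dd_spec I hiM
  have hδ1 : 1 ≤ δ := by
    by_contra h
    have : δ = 0 := by omega
    rw [this, hh_zero] at hδs
    omega
  have hi' : hh I (δ - 1) < i := by
    by_contra h
    push Not at h
    have := dd_le I h
    omega
  have IH := ih (δ - 1) (by omega)
  rw [show δ - 1 + 1 = δ by omega] at IH
  set i' := hh I (δ - 1) with hi'd
  have hin : i ≤ n := by omega
  have hprod : ∏ j ∈ Finset.Icc 1 i, dd I j ≤ (∏ j ∈ Finset.Icc 1 i', dd I j) * δ^(i - i') := by
    have e1 : Finset.Icc 1 i = Finset.Icc 1 i' ∪ Finset.Ioc i' i := by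
      ext j; simp only [Finset.mem_Icc, Finset.mem_union, Finset.mem_Ioc]; omega
    have e2 : Disjoint (Finset.Icc 1 i') (Finset.Ioc i' i) := by
      rw [Finset.disjoint_left]
      intro j; simp only [Finset.mem_Icc, Finset.mem_Ioc]; omega
    rw [e1, Finset.prod_union e2]
    refine Nat.mul_le_mul_left _ ?_
    calc ∏ j ∈ Finset.Ioc i' i, dd I j ≤ ∏ j ∈ Finset.Ioc i' i, δ :=
          Finset.prod_le_prod' fun j hj => dd_mono I (Finset.mem_Ioc.1 hj).2 hiM
      _ = _ := by simp
  set pp := ∏ j ∈ Finset.Icc 1 i, dd I j with hpp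
  set K := 2^n * n.factorial with hK
  have hKpos : 1 ≤ K := Nat.mul_pos (by positivity) (Nat.factorial_pos n)
  set e := n - i with he
  have hePe : ee P = e := by omega
  have hHm : HP P (δ - 1) = HP I (δ - 1) :=
    HP_eq hP2 fun f hf hd => hP3 f hf (by omega)
  have hA : δ^e * pp ≤ n.factorial * K^i' * HP I (δ-1) := by
    calc δ^e * pp ≤ δ^e * ((∏ j ∈ Finset.Icc 1 i', dd I j) * δ^(i - i')) :=
          Nat.mul_le_mul_left _ hprod
      _ = δ^(n - i') * ∏ j ∈ Finset.Icc 1 i', dd I j := by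
          rw [show n - i' = e + (i - i') by omega, pow_add]; ring
      _ ≤ _ := IH
  have h2e : 2^e ≤ 2^n := Nat.pow_le_pow_right (by omega) (by omega)
  have hKi : K^i' * K ≤ K^i := by
    rw [← pow_succ]; exact Nat.pow_le_pow_right hKpos hi'
  rcases Nat.lt_or_ge (M+1) (2*δ) with hc | hc
  · calc (M+1)^e * pp ≤ (2*δ)^e * pp := Nat.mul_le_mul_right _ (Nat.pow_le_pow_left hc.le _)
      _ = 2^e * (δ^e * pp) := by rw [mul_pow]; ring
      _ ≤ K * (n.factorial * K^i' * HP I (δ-1)) := by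
          refine Nat.mul_le_mul (h2e.trans ?_) hA
          exact Nat.le_mul_of_pos_right _ (Nat.factorial_pos n)
      _ = n.factorial * (K^i' * K) * HP I (δ-1) := by ring
      _ ≤ n.factorial * K^i * HP I M :=
          Nat.mul_le_mul (Nat.mul_le_mul_left _ hKi) (HP_mono I (by omega))
  · have hg := HP_growth P (δ - 1) (M - (δ - 1))
    rw [show δ - 1 + (M - (δ - 1)) = M by omega, hHM, hHm, hePe] at hg
    have hb1 := le_bb' e (M - (δ - 1))
    have hb2 : bb e (δ - 1) ≤ δ^e := by
      have := bb_le e (δ - 1)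
      rwa [show δ - 1 + 1 = δ by omega] at this
    have hfac : e.factorial ≤ n.factorial := Nat.factorial_le (by omega)
    have hM2 : (M+1)^e ≤ 2^e * (M - (δ-1) + 1)^e := by
      rw [← mul_pow]; exact Nat.pow_le_pow_left (by omega) _
    have hδe : 0 < δ^e := by positivity
    refine Nat.le_of_mul_le_mul_left ?_ hδe
    calc δ^e * ((M+1)^e * pp) = (M+1)^e * (δ^e * pp) := by ring
      _ ≤ (2^e * (M - (δ-1) + 1)^e) * (n.factorial * K^i' * HP I (δ-1)) := Nat.mul_le_mul hM2 hA
      _ ≤ (2^n * (n.factorial * bb e (M - (δ-1)))) * (n.factorial * K^i' * HP I (δ-1)) :=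
          Nat.mul_le_mul_right _ (Nat.mul_le_mul h2e (hb1.trans (Nat.mul_le_mul_right _ hfac)))
      _ = n.factorial * (K^i' * K) * (HP I (δ-1) * bb e (M - (δ-1))) := by rw [hK]; ring
      _ ≤ n.factorial * K^i * (HP I M * δ^e) :=
          Nat.mul_le_mul (Nat.mul_le_mul_left _ hKi) (hg.trans (Nat.mul_le_mul_left _ hb2))
      _ = δ^e * (n.factorial * K^i * HP I M) := by ring

lemma avoid {E : Type*} [AddCommGroup E] [Module ℂ E] (U : Submodule ℂ E) {ι : Type*}
    (s : Set ι) (hs : s.Finite) (W : ι → Submodule ℂ E) (h : ∀ k ∈ s, ¬ U ≤ W k) :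
    ∃ g ∈ U, ∀ k ∈ s, g ∉ W k := by
  haveI := hs.to_subtype
  by_contra hc
  push Not at hc
  have hcov : ⋃ k : s, (((W k).comap U.subtype : Subspace ℂ U) : Set U) = Set.univ := by
    ext ⟨g, hg⟩
    simp only [Set.mem_iUnion, Set.mem_univ, iff_true]
    obtain ⟨k, hk, hk2⟩ := hc g hg
    exact ⟨⟨k, hk⟩, hk2⟩
  obtain ⟨k, hk⟩ := Subspace.exists_eq_top_of_iUnion_eq_univ hcov
  refine h k k.2 fun g hg => ?_
  have : (⟨g, hg⟩ : U) ∈ (W k).comap U.subtype := hk ▸ Submodule.mem_top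
  exact this

theorem select (i : ℕ) (hi : i ≤ n - ee I) :
    ∃ f : ℕ → MvPolynomial (Fin n) ℂ,
      (∀ j ∈ Finset.Icc 1 i, f j ∈ I ∧ (f j).totalDegree ≤ dd I j) ∧
      ∀ Q : Ideal (MvPolynomial (Fin n) ℂ), Q.IsPrime → Q ≤ I →
        (∀ j ∈ Finset.Icc 1 i, f j ∈ Q) → i ≤ n - ee Q := by
  induction i with
  | zero => exact ⟨fun _ => 0, by simp, by simp⟩
  | succ i ih =>
    obtain ⟨f, hf1, hf2⟩ := ih (by omega)
    let J : Ideal (MvPolynomial (Fin n) ℂ) := Ideal.span (f '' (Finset.Icc 1 i : Set ℕ))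
    have hJ : ∀ Q : Ideal (MvPolynomial (Fin n) ℂ), J ≤ Q ↔ ∀ j ∈ Finset.Icc 1 i, f j ∈ Q := by
      intro Q
      rw [Ideal.span_le, Set.image_subset_iff]
      rfl
    let U : Submodule ℂ (MvPolynomial (Fin n) ℂ) :=
      I.restrictScalars ℂ ⊓ restrictTotalDegree (Fin n) ℂ (dd I (i+1))
    let s : Set (Ideal (MvPolynomial (Fin n) ℂ)) :=
      {Q | Q ∈ J.minimalPrimes ∧ Q ≤ I ∧ n - ee Q = i}
    have hs : s.Finite := (Ideal.finite_minimalPrimes_of_isNoetherianRing _ J).subset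
      fun Q h => h.1
    obtain ⟨g, hgU, hg⟩ := avoid U s hs (fun Q => Q.restrictScalars ℂ) (by
      rintro Q ⟨h1, h2, h3⟩ hle
      have : Ok I (dd I (i+1)) Q := ⟨h1.1.1, h2, fun p hp hd =>
        hle ⟨hp, (mem_restrictTotalDegree _ _ _).2 hd⟩⟩
      have h4 := hh_le I this
      have h5 := dd_spec I hi
      omega)
    have hgI : g ∈ I := hgU.1
    have hgd : g.totalDegree ≤ dd I (i+1) := (mem_restrictTotalDegree _ _ _).1 hgU.2
    have hupd : ∀ j ∈ Finset.Icc 1 i, Function.update f (i+1) g j = f j := by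
      intro j hj
      rw [Finset.mem_Icc] at hj
      exact Function.update_of_ne (by omega) _ _
    refine ⟨Function.update f (i+1) g, ?_, ?_⟩
    · intro j hj
      rcases eq_or_ne j (i+1) with rfl | hne
      · rw [Function.update_self]; exact ⟨hgI, hgd⟩
      · rw [Finset.mem_Icc] at hj
        have hj' : j ∈ Finset.Icc 1 i := Finset.mem_Icc.2 (by omega)
        rw [hupd j hj']; exact hf1 j hj'
    · intro Q hQ hQI hfQ
      have hgQ : g ∈ Q := by
        have := hfQ (i+1) (Finset.mem_Icc.2 (by omega))
        rwa [Function.update_self] at this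
      have hJQ : J ≤ Q := (hJ Q).2 fun j hj => by
        rw [← hupd j hj]
        rw [Finset.mem_Icc] at hj
        exact hfQ j (Finset.mem_Icc.2 (by omega))
      obtain ⟨Q0, hQ0, hle⟩ := Ideal.exists_minimalPrimes_le hJQ
      haveI := hQ0.1.1
      have h1 := hf2 Q0 hQ0.1.1 (hle.trans hQI) ((hJ Q0).1 hQ0.1.2)
      have h2 := ee_le_n Q0
      rcases hle.eq_or_lt with h | h
      · subst h
        by_contra hlt
        exact hg Q0 ⟨hQ0, hQI, by omega⟩ hgQ
      · have := ee_lt h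
        omega

end P11

theorem final (n : ℕ) :
    ∃ C : ℝ, 0 < C ∧
      ∀ (V : Set (Fin n → ℂ)) (d : ℕ), IsIrredVariety n V → dim n V = d →
        ∃ f : ℕ → MvPolynomial (Fin n) ℂ,
          IsIrredComponent n V (zeroLocusUpTo n f (n - d)) ∧
          (∏ i ∈ Finset.Icc 1 (n - d), ((f i).totalDegree : ℝ)) ≤ C * (degree n V : ℝ) := by
  refine ⟨((n.factorial * (2^n * n.factorial)^n : ℕ) : ℝ), by positivity, ?_⟩
  intro V d hV hd
  haveI := vi_prime hV
  set I := vanishingIdeal n V with hIdef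
  have hdI : d = ee I := by rw [← hd, dim_eq hV]
  subst hdI
  obtain ⟨f, hf1, hf2⟩ := select I (n - ee I) le_rfl
  have hen := ee_le_n I
  refine ⟨f, ⟨hV, ?_, ?_⟩, ?_⟩
  · rintro x hx _ ⟨j, h1, h2, rfl⟩
    exact (hf1 j (Finset.mem_Icc.2 ⟨h1, h2⟩)).1 x hx
  · intro W hW hVW hWZ
    haveI := vi_prime hW
    have hle : vanishingIdeal n W ≤ I := vi_anti hVW
    have := hf2 _ (vi_prime hW) hle (fun j hj x hx =>
      hWZ hx _ ⟨j, (Finset.mem_Icc.1 hj).1, (Finset.mem_Icc.1 hj).2, rfl⟩)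
    rcases hle.eq_or_lt with h | h
    · rw [← zl_vi hW.1, h, zl_vi hV.1]
    · have h1 := ee_lt h
      have h2 := ee_le_n (vanishingIdeal n W)
      omega
  · obtain ⟨D, hD, hDV⟩ := degree_ge hV
    obtain ⟨M, hM⟩ := hh_top I
    have h1 := main_ineq I M
    rw [hM, show n - (n - ee I) = ee I by omega] at h1
    have h2 : HP I M ≤ D * (M+1)^(ee I) := (hD M).trans (Nat.mul_le_mul_left _ (bb_le _ _))
    have h3 : ∏ j ∈ Finset.Icc 1 (n - ee I), dd I j ≤
        n.factorial * (2^n * n.factorial)^(n - ee I) * D := by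
      refine Nat.le_of_mul_le_mul_left ?_ (show 0 < (M+1)^(ee I) by positivity)
      refine h1.trans ((Nat.mul_le_mul_left _ h2).trans (le_of_eq (by ring)))
    have h4 : ∏ j ∈ Finset.Icc 1 (n - ee I), (f j).totalDegree ≤
        n.factorial * (2^n * n.factorial)^n * degree n V := by
      refine (Finset.prod_le_prod' fun j hj => (hf1 j hj).2).trans (h3.trans ?_)
      refine Nat.mul_le_mul (Nat.mul_le_mul_left _ ?_) hDV
      exact Nat.pow_le_pow_right (Nat.mul_pos (by positivity) (Nat.factorial_pos n)) (by omega)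
    exact_mod_cast h4
end Part11

/-- Theorem 3 of the paper: an asymptotic converse to Bézout's inequality.
Every irreducible variety `V ⊆ ℂⁿ` of dimension `d` is an irreducible component of
`Z(f₁, …, f_{n-d})` for polynomials with `∏ deg f_i ≤ C(n) · deg V`. -/
theorem statement2 (n : ℕ) :
    ∃ C : ℝ, 0 < C ∧
      ∀ (V : Set (Fin n → ℂ)) (d : ℕ), IsIrredVariety n V → dim n V = d →
        ∃ f : ℕ → MvPolynomial (Fin n) ℂ,
          IsIrredComponent n V (zeroLocusUpTo n f (n - d)) ∧
          (∏ i ∈ Finset.Icc 1 (n - d), ((f i).totalDegree : ℝ)) ≤ C * (degree n V : ℝ) := by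
  exact final n

end Paper
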